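/- arXiv:2001.09525 — 2 statements merged into one kernel-verified Lean document; each statement's English description precedes it below -/
import Mathlib

section
/- There is a unique real number α* in the interval [π/5, π/4] satisfying sin(α*)·sin(2α*) = sin(3α*)² (numerically α* ≈ 41.831452°). A triangle with side lengths a < b < c has three pairwise distinct minimum area isosceles containers if and only if its three angles are α*, π − 3α*, and 2α*. In particular, up to similarity there is a unique triangle with precisely 3 different minimum area isosceles containers. -/
open EuclideanGeometry MeasureTheory Real

noncomputable section

/-- The Euclidean plane. -/
abbrev Pt : Type := EuclideanSpace ℝ (Fin 2)

/-- The closed triangular region with vertices `A`, `B`, `C`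
(the convex hull of the three vertices). -/
def tri (A B C : Pt) : Set Pt := convexHull ℝ {A, B, C}

/-- The area of the triangle `A B C`:
the 2-dimensional Lebesgue measure of its convex hull. -/
def triArea (A B C : Pt) : ℝ := (volume (tri A B C)).toReal

/-- A triangle is isosceles if at least two of its side lengths coincide. -/
def IsIsosceles (A B C : Pt) : Prop :=
  dist B C = dist C A ∨ dist C A = dist A B ∨ dist A B = dist B C

/-- `S P R` is an isosceles container for the triangle `A B C`:
it is a genuine isosceles triangle whose convex hull contains that of `A B C`. -/
def IsIsoscelesContainer (A B C S P R : Pt) : Prop :=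
  AffineIndependent ℝ ![S, P, R] ∧ IsIsosceles S P R ∧ tri A B C ⊆ tri S P R

/-- `S P R` is a minimum area isosceles container for the triangle `A B C`. -/
def IsMinIsoscelesContainer (A B C S P R : Pt) : Prop :=
  IsIsoscelesContainer A B C S P R ∧
    ∀ S' P' R' : Pt, IsIsoscelesContainer A B C S' P' R' →
      triArea S P R ≤ triArea S' P' R'

/-- `Z` lies on the ray starting at `X` passing through `Y`. -/
def OnRay (X Y Z : Pt) : Prop := SameRay ℝ (Y - X) (Z - X)

lemma strictMono_apex_area {p h g g₁ : ℝ} (hh : 0 < h) (hg₁ : 0 < g₁) (hg : g₁ < g)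
    (hp : |p| ≤ h * g₁) :
    (p + h * g₁) ^ 2 * g₁ * (1 + g ^ 2) < (p + h * g) ^ 2 * g * (1 + g₁ ^ 2) := by
  obtain ⟨hp1, hp2⟩ := abs_le.mp hp
  have hg0 : 0 < g := hg₁.trans hg
  have h1 : p ^ 2 ≤ h ^ 2 * g₁ ^ 2 := by nlinarith
  have h2 : p ^ 2 * (g * g₁) ≤ h ^ 2 * (g ^ 2 * g₁ ^ 2) := by
    calc p ^ 2 * (g * g₁) ≤ (h ^ 2 * g₁ ^ 2) * (g * g₁) := by gcongr
      _ ≤ (h ^ 2 * g₁ ^ 2) * (g * g) := by gcongr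
      _ = _ := by ring
  have h3 : h ^ 2 * (g * g₁) < (p + h * (g + g₁)) ^ 2 := by
    have : h * g ≤ p + h * (g + g₁) := by nlinarith
    calc h ^ 2 * (g * g₁) < h ^ 2 * (g * g) := by gcongr
      _ = (h * g) ^ 2 := by ring
      _ ≤ _ := by gcongr
  have h4 : 0 < p ^ 2 * (1 - g * g₁) + 2 * p * h * (g + g₁)
      + h ^ 2 * (g ^ 2 + g * g₁ + g₁ ^ 2 + g ^ 2 * g₁ ^ 2) := by nlinarith
  have h5 := mul_pos (sub_pos.mpr hg) h4
  nlinarith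

lemma sliding_bound_far {m s x y h σ ρ L : ℝ} (hsx : s ≤ x) (hxy : x < y) (hh : 0 < h)
    (hσ : 0 < σ) (hσ2 : σ ^ 2 = s ^ 2 + h ^ 2) (hρ : 0 < ρ) (hρ2 : ρ ^ 2 = x ^ 2 + h ^ 2)
    (hLσ : σ ≤ L) (hLy : y - s ≤ L)
    (hm2 : m < 2) (hlt : ρ < y - x) (hfar : m * ρ ≤ y - x) :
    m * (y - x) * σ < L ^ 2 ∨ (m * (y - x) * σ = L ^ 2 ∧ s = x ∧ L = y - x) := by
  have hd : 0 < y - x := sub_pos.mpr hxy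
  have hL : 0 < L := by linarith
  have tri : σ ≤ ρ + (x - s) := by
    have hxρ : -x ≤ ρ := by nlinarith
    refine le_of_sq_le_sq ?_ (by linarith)
    nlinarith
  have hm := hfar
  rcases eq_or_lt_of_le hsx with rfl | hs
  · have : σ = ρ := (sq_eq_sq₀ hσ.le hρ.le).mp (by rw [hσ2, hρ2])
    subst this
    rcases eq_or_lt_of_le hLy with e | hl
    · rw [← e]
      rcases eq_or_lt_of_le hm with e' | hl'
      · right; exact ⟨by nlinarith, rfl, rfl⟩
      · left; nlinarith
    · left; nlinarith
  · left
    have hM : (y - s) ^ 2 ≤ L ^ 2 := by gcongr; linarith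
    refine lt_of_lt_of_le ?_ hM
    rcases le_or_gt (y - x) (2 * ρ) with h2 | h2
    · have h3 : m * (y - x) * σ * ρ ≤ (y - x) ^ 2 * (ρ + (x - s)) := by
        calc m * (y - x) * σ * ρ = (m * ρ) * ((y - x) * σ) := by ring
          _ ≤ (y - x) * ((y - x) * (ρ + (x - s))) := by gcongr
          _ = _ := by ring
      have h4 : (y - x) ^ 2 * (ρ + (x - s)) < (y - s) ^ 2 * ρ := by
        have : 0 < (x - s) * (((y - s) + (y - x)) * ρ - (y - x) ^ 2) := by
          apply mul_pos (by linarith)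
          nlinarith
        nlinarith
      exact lt_of_mul_lt_mul_right (h3.trans_lt h4) hρ.le
    · have h3 : m * (y - x) * σ < 2 * (y - x) * (ρ + (x - s)) := by
        calc m * (y - x) * σ < 2 * (y - x) * σ := by gcongr
          _ ≤ _ := by gcongr
      nlinarith [sq_nonneg (y - s - (y - x))]

lemma lt_of_two_mul_ge {m x y h q : ℝ} (hN : 0 < y ^ 2 + h ^ 2)
    (hu : 2 * y * (y - x) < y ^ 2 + h ^ 2) (hm3 : m * (y ^ 2 + h ^ 2) ≤ 2 * (x * y + h ^ 2))
    (hxy : 0 < y - x) (hy : 0 < y) (hq : y ^ 2 + h ^ 2 ≤ 2 * y * q) : m * (y - x) < q := by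
  have h1 : m * (y ^ 2 + h ^ 2) ≤ 2 * (y ^ 2 + h ^ 2) - 2 * y * (y - x) := by linarith
  have h2 : m * (2 * y * (y - x)) < y ^ 2 + h ^ 2 := by
    have h3 : m * (y ^ 2 + h ^ 2) * (2 * y * (y - x))
        ≤ (2 * (y ^ 2 + h ^ 2) - 2 * y * (y - x)) * (2 * y * (y - x)) := by gcongr
    have h4 : 0 < ((y ^ 2 + h ^ 2) - 2 * y * (y - x)) ^ 2 := by
      have : 0 < (y ^ 2 + h ^ 2) - 2 * y * (y - x) := by linarith
      positivity
    have h5 : (m * (2 * y * (y - x))) * (y ^ 2 + h ^ 2)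
        < (y ^ 2 + h ^ 2) * (y ^ 2 + h ^ 2) := by linarith
    exact lt_of_mul_lt_mul_right h5 hN.le
  have h6 : (2 * y) * (m * (y - x)) < (2 * y) * q := by linarith
  exact lt_of_mul_lt_mul_left h6 (by positivity)

lemma sliding_bound_near {m s x y h σ ρ L : ℝ} (hsx : s ≤ x) (hxy : x < y) (hh : 0 < h)
    (hσ : 0 < σ) (hσ2 : σ ^ 2 = s ^ 2 + h ^ 2) (hρ : 0 < ρ) (hρ2 : ρ ^ 2 = x ^ 2 + h ^ 2)
    (hLσ : σ ≤ L) (hLy : y - s ≤ L)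
    (hgt : y - x < ρ)
    (hnear : m * (y - x) ≤ ρ ∧ m * (y ^ 2 + h ^ 2) ≤ 2 * (x * y + h ^ 2)) :
    m * (y - x) * σ < L ^ 2 ∨ (m * (y - x) * σ = L ^ 2 ∧ s = x ∧ L = ρ) := by
  have hd : 0 < y - x := sub_pos.mpr hxy
  have hL : 0 < L := by linarith
  obtain ⟨hm1, hm3⟩ := hnear
  have hN : 0 < y ^ 2 + h ^ 2 := by positivity
  have hu : 2 * y * (y - x) < y ^ 2 + h ^ 2 := by nlinarith
  have habs : |s| < σ := by
    apply abs_lt_of_sq_lt_sq _ hσ.le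
    nlinarith
  obtain ⟨hs1, hs2⟩ := abs_lt.mp habs
  rcases le_or_gt σ (y - s) with hM | hM
  · left
    have hy : 0 < y := by linarith
    have := lt_of_two_mul_ge hN hu hm3 hd hy (q := y - s) (by nlinarith)
    calc m * (y - x) * σ < (y - s) * σ := by gcongr
      _ ≤ L * L := by gcongr
      _ = L ^ 2 := by ring
  · rcases le_or_gt h y with hyh | hyh
    · left
      have hy : 0 < y := by linarith
      have hr : 0 < s + σ := by linarith
      have h1 : 0 ≤ ((s + σ) - y) * ((s + σ) * y - h ^ 2) := by
        apply mul_nonneg (by linarith)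
        nlinarith
      have h2 : (s + σ) * (y ^ 2 + h ^ 2) ≤ (s + σ) * (2 * y * σ) := by nlinarith
      have := lt_of_two_mul_ge hN hu hm3 hd hy (le_of_mul_le_mul_left h2 hr)
      calc m * (y - x) * σ < σ * σ := by gcongr
        _ ≤ L * L := by gcongr
        _ = L ^ 2 := by ring
    · rcases le_or_gt x 0 with hx | hx
      · have hσρ : ρ ≤ σ := by
          refine le_of_sq_le_sq ?_ hσ.le
          nlinarith
        rcases eq_or_lt_of_le hsx with rfl | hs
        · have : σ = ρ := (sq_eq_sq₀ hσ.le hρ.le).mp (by rw [hσ2, hρ2])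
          subst this
          rcases eq_or_lt_of_le hLσ with e | hl
          · rw [← e]
            rcases eq_or_lt_of_le hm1 with e' | hl'
            · right; exact ⟨by nlinarith, rfl, rfl⟩
            · left; nlinarith
          · left; nlinarith
        · left
          have hlt : ρ < σ := lt_of_le_of_ne hσρ (by rintro rfl; nlinarith)
          calc m * (y - x) * σ ≤ ρ * σ := by gcongr
            _ < σ * σ := by gcongr
            _ ≤ L * L := by gcongr
            _ = L ^ 2 := by ring
      · left
        have hσh : h ≤ σ := le_of_sq_le_sq (by nlinarith) hσ.le
        have h1 : 2 * (y - x) * (x * y + h ^ 2) < h * (y ^ 2 + h ^ 2) := by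
          have e1 : 0 < h * (h - y) ^ 2 := by
            have : 0 < h - y := by linarith
            positivity
          have e2 : 0 < x * (h ^ 2 - y ^ 2) := mul_pos hx (by nlinarith)
          have e3 : 0 < x * (x * y) := by
            have : 0 < y := by linarith
            positivity
          nlinarith
        have h2 : (y - x) * m * (y ^ 2 + h ^ 2) < h * (y ^ 2 + h ^ 2) := by nlinarith
        have h3 : (y - x) * m < h := lt_of_mul_lt_mul_right h2 hN.le
        calc m * (y - x) * σ < h * σ := by gcongr; linarith
          _ ≤ L * L := by gcongr; linarith
          _ = L ^ 2 := by ring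

/-- `X = 0`, `Y = (d, 0)`, `Z = (p, h)`, apex `X`, apex angle `2 arctan g`. -/
lemma obtuse_apex_bound {m d p h ρ g L : ℝ} (hd : 0 < d) (hh : 0 < h)
    (hρ : 0 < ρ) (hρ2 : ρ ^ 2 = p ^ 2 + h ^ 2) (hLd : d ≤ L) (hLg : p + h * g ≤ L)
    (hg1 : ρ - p < h * g) (hg2 : ρ + p ≤ h * g)
    (hfar : ρ < d → m * ρ ≤ d ∧ m * ((d - p) ^ 2 + h ^ 2) ≤ 2 * d * (d - p))
    (hnear : d < ρ → m * d ≤ ρ) (hne : ρ ≠ d) :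
    m * d * h * (1 + g ^ 2) < L ^ 2 * (2 * g) ∨
      (m * d * h * (1 + g ^ 2) = L ^ 2 * (2 * g) ∧ L = d ∧ ρ < d ∧ h * g = d - p) := by
  have hpρ : |p| < ρ := abs_lt_of_sq_lt_sq (by nlinarith) hρ.le
  obtain ⟨hp1, hp2⟩ := abs_lt.mp hpρ
  have hhρ : h ≤ ρ := le_of_sq_le_sq (by nlinarith) hρ.le
  have hg : 0 < g := by
    have : 0 < h * g := by linarith
    exact pos_of_mul_pos_right this hh.le
  have hL : 0 < L := by linarith
  rcases le_or_gt (p + h * g) d with hc | hc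
  · have hlt : ρ < d := by linarith
    obtain ⟨_, hm⟩ := hfar hlt
    have hdp : 0 < d - p := by linarith
    have hN : 0 < (d - p) ^ 2 + h ^ 2 := by positivity
    have hg1' : 1 ≤ g := by nlinarith
    have h1 : 0 ≤ (d - p - h * g) * ((d - p) * g - h) :=
      mul_nonneg (by linarith) (by nlinarith)
    have h2 : (d - p) * h * (1 + g ^ 2) ≤ g * ((d - p) ^ 2 + h ^ 2) := by nlinarith
    have h3 : m * d * h * (1 + g ^ 2) * ((d - p) ^ 2 + h ^ 2)
        ≤ d ^ 2 * (2 * g) * ((d - p) ^ 2 + h ^ 2) := by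
      calc m * d * h * (1 + g ^ 2) * ((d - p) ^ 2 + h ^ 2)
          = (m * ((d - p) ^ 2 + h ^ 2)) * (d * h * (1 + g ^ 2)) := by ring
        _ ≤ (2 * d * (d - p)) * (d * h * (1 + g ^ 2)) := by gcongr
        _ = 2 * d ^ 2 * ((d - p) * h * (1 + g ^ 2)) := by ring
        _ ≤ 2 * d ^ 2 * (g * ((d - p) ^ 2 + h ^ 2)) := by gcongr
        _ = _ := by ring
    have h4 := le_of_mul_le_mul_right h3 hN
    rcases eq_or_lt_of_le hLd with rfl | hl
    · rcases eq_or_lt_of_le hc with e | hc'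
      · rcases eq_or_lt_of_le h4 with e' | h4'
        · right; exact ⟨e', rfl, hlt, by linarith⟩
        · left; exact h4'
      · left
        have h1' : 0 < (d - p - h * g) * ((d - p) * g - h) :=
          mul_pos (by linarith) (by nlinarith)
        have h2' : (d - p) * h * (1 + g ^ 2) < g * ((d - p) ^ 2 + h ^ 2) := by nlinarith
        have h3' : m * d * h * (1 + g ^ 2) * ((d - p) ^ 2 + h ^ 2)
            < d ^ 2 * (2 * g) * ((d - p) ^ 2 + h ^ 2) := by
          calc m * d * h * (1 + g ^ 2) * ((d - p) ^ 2 + h ^ 2)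
              = (m * ((d - p) ^ 2 + h ^ 2)) * (d * h * (1 + g ^ 2)) := by ring
            _ ≤ (2 * d * (d - p)) * (d * h * (1 + g ^ 2)) := by gcongr
            _ = 2 * d ^ 2 * ((d - p) * h * (1 + g ^ 2)) := by ring
            _ < 2 * d ^ 2 * (g * ((d - p) ^ 2 + h ^ 2)) := by gcongr
            _ = _ := by ring
        exact lt_of_mul_lt_mul_right h3' hN.le
    · left
      refine h4.trans_lt ?_
      gcongr
  · left
    have hΛ : 0 < p + h * g := by linarith
    suffices H : m * d * h * (1 + g ^ 2) < (p + h * g) ^ 2 * (2 * g) by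
      refine H.trans_le ?_
      gcongr
    rcases le_or_gt (ρ + |p|) (d - p) with hG | hG
    · have hlt : ρ < d := lt_of_le_of_ne (by linarith [neg_abs_le p]) hne
      obtain ⟨_, hm⟩ := hfar hlt
      have hdp : 0 < d - p := by linarith [abs_nonneg p]
      have hN : 0 < (d - p) ^ 2 + h ^ 2 := by positivity
      have key := strictMono_apex_area (p := p) (g := g) (g₁ := (d - p) / h) hh (by positivity)
        (by rw [div_lt_iff₀ hh]; linarith)
        (by rw [mul_div_cancel₀ _ hh.ne']; linarith)
      rw [mul_div_cancel₀ _ hh.ne'] at key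
      have e1 : (p + (d - p)) ^ 2 * ((d - p) / h) * (1 + g ^ 2) * h ^ 2 = 
        d ^ 2 * (d - p) * h * (1 + g ^ 2) := by field_simp; ring
      have e2 : (p + h * g) ^ 2 * g * (1 + ((d - p) / h) ^ 2) * h ^ 2
        = (p + h * g) ^ 2 * g * ((d - p) ^ 2 + h ^ 2) := by field_simp; ring
      have key2 : d ^ 2 * (d - p) * h * (1 + g ^ 2)
          < (p + h * g) ^ 2 * g * ((d - p) ^ 2 + h ^ 2) := by
        rw [← e1, ← e2]; gcongr
      have h3' : m * d * h * (1 + g ^ 2) * ((d - p) ^ 2 + h ^ 2)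
            < (p + h * g) ^ 2 * (2 * g) * ((d - p) ^ 2 + h ^ 2) := by
          calc m * d * h * (1 + g ^ 2) * ((d - p) ^ 2 + h ^ 2)
              = (m * ((d - p) ^ 2 + h ^ 2)) * (d * h * (1 + g ^ 2)) := by ring
            _ ≤ (2 * d * (d - p)) * (d * h * (1 + g ^ 2)) := by gcongr
            _ = 2 * (d ^ 2 * (d - p) * h * (1 + g ^ 2)) := by ring
            _ < 2 * ((p + h * g) ^ 2 * g * ((d - p) ^ 2 + h ^ 2)) := by gcongr
            _ = _ := by ring
      exact lt_of_mul_lt_mul_right h3' hN.le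
    · -- compare with the apex half angle whose tangent is `(ρ + |p|) / h`
      obtain ⟨q, hqd⟩ : ∃ q, q = ρ + |p| := ⟨_, rfl⟩
      rw [← hqd] at hG
      have hq : 0 < q := by rw [hqd]; positivity
      have hsq : q ^ 2 + h ^ 2 = 2 * ρ * q := by rw [hqd]; nlinarith [sq_abs p]
      have hlow : q ≤ h * g → (p + q) ^ 2 * (h * (1 + g ^ 2)) ≤ (p + h * g) ^ 2 * g * (2 * ρ) ∧
          (q < h * g → (p + q) ^ 2 * (h * (1 + g ^ 2)) < (p + h * g) ^ 2 * g * (2 * ρ)) := by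
        intro hle
        have strict : q < h * g →
            (p + q) ^ 2 * (h * (1 + g ^ 2)) < (p + h * g) ^ 2 * g * (2 * ρ) := by
          intro hl
          have key := strictMono_apex_area (p := p) (g := g) (g₁ := q / h) hh (by positivity)
            (by rw [div_lt_iff₀ hh]; linarith)
            (by rw [mul_div_cancel₀ _ hh.ne']; linarith)
          rw [mul_div_cancel₀ _ hh.ne'] at key
          have e1 : (p + q) ^ 2 * (q / h) * (1 + g ^ 2) * h ^ 2 =
            (p + q) ^ 2 * (h * (1 + g ^ 2)) * q := by field_simp
          have e2 : (p + h * g) ^ 2 * g * (1 + (q / h) ^ 2) * h ^ 2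
            = (p + h * g) ^ 2 * g * (q ^ 2 + h ^ 2) := by field_simp; ring
          rw [hsq] at e2
          have key2 : (p + q) ^ 2 * (h * (1 + g ^ 2)) * q
              < (p + h * g) ^ 2 * g * (2 * ρ) * q := by
            rw [← e1, show (p + h * g) ^ 2 * g * (2 * ρ) * q
              = (p + h * g) ^ 2 * g * (2 * ρ * q) by ring, ← e2]
            gcongr
          exact lt_of_mul_lt_mul_right key2 hq.le
        refine ⟨?_, strict⟩
        rcases eq_or_lt_of_le hle with e | hl
        · have : h * (1 + g ^ 2) = g * (2 * ρ) := by
            apply mul_left_cancel₀ hh.ne'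
            rw [e] at hsq
            linarith
          rw [this, e]
          exact le_of_eq (by ring)
        · exact (strict hl).le
      have hg0 : 0 < h * (1 + g ^ 2) := by positivity
      suffices H : m * d * h * (1 + g ^ 2) * ρ < (p + h * g) ^ 2 * (2 * g) * ρ from
        lt_of_mul_lt_mul_right H hρ.le
      rcases le_or_gt p 0 with hp | hp
      · have hqe : q = ρ - p := by rw [hqd, abs_of_nonpos hp]; ring
        have hd' : d < ρ := by linarith
        calc m * d * h * (1 + g ^ 2) * ρ = (m * d) * (ρ * (h * (1 + g ^ 2))) := by ring
          _ ≤ ρ * (ρ * (h * (1 + g ^ 2))) := by gcongr; exact hnear hd'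
          _ = (p + q) ^ 2 * (h * (1 + g ^ 2)) := by rw [hqe]; ring
          _ < (p + h * g) ^ 2 * g * (2 * ρ) := (hlow (by linarith)).2 (by linarith)
          _ = _ := by ring
      · have hqe : q = ρ + p := by rw [hqd, abs_of_pos hp]
        have hmd : m * d * ρ < (p + q) ^ 2 := by
          rcases lt_or_gt_of_ne hne with h1 | h1
          · calc m * d * ρ = (m * ρ) * d := by ring
              _ ≤ d * d := by gcongr; exact (hfar h1).1
              _ < (p + q) * (p + q) := by gcongr <;> linarith
              _ = _ := by ring
          · calc m * d * ρ ≤ ρ * ρ := by gcongr; exact hnear h1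
              _ < (p + q) * (p + q) := by gcongr <;> linarith
              _ = _ := by ring
        calc m * d * h * (1 + g ^ 2) * ρ = (m * d * ρ) * (h * (1 + g ^ 2)) := by ring
          _ < (p + q) ^ 2 * (h * (1 + g ^ 2)) := by gcongr
          _ ≤ (p + h * g) ^ 2 * g * (2 * ρ) := (hlow (by linarith)).1
          _ = _ := by ring

set_option maxHeartbeats 800000 in
/-- The leg case, with the legs scaled to length `1`: `X = (x, 0)` and `Y = (y, 0)` lie on one leg,
the apex is the origin, and the apex angle has cosine `k` and sine `l`. -/
lemma leg_bound {m x y b c k l ρ : ℝ} (hx : 0 ≤ x) (hxy : x < y) (hy : y ≤ 1)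
    (hb : 0 < b) (hc : 0 ≤ c) (hbc : b + c ≤ 1) (hkl : k ^ 2 + l ^ 2 = 1) (hl : 0 < l)
    (hρ : 0 < ρ) (hρ2 : ρ ^ 2 = (c + b * k - x) ^ 2 + (b * l) ^ 2) (hm0 : 0 < m) (hm2 : m < 2)
    (hfar : ρ < y - x → m * ρ ≤ y - x ∧
      m * ((y - (c + b * k)) ^ 2 + (b * l) ^ 2) ≤ 2 * (y - x) * (y - (c + b * k)))
    (hnear : y - x < ρ → m * (y - x) ≤ ρ ∧
      m * ((y - (c + b * k)) ^ 2 + (b * l) ^ 2)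
        ≤ 2 * ((x - (c + b * k)) * (y - (c + b * k)) + (b * l) ^ 2))
    (hne : ρ ≠ y - x) :
    m * (y - x) * b < 1 ∨ (m * (y - x) * b = 1 ∧ x = 0 ∧
      (y = 1 ∧ c = 0 ∧ ρ < y - x ∨ c = 0 ∧ b = 1 ∧ y - x < ρ ∨
        y = 1 ∧ b + c = 1 ∧ ρ < y - x)) := by
  have hd : 0 < y - x := sub_pos.mpr hxy
  have hh : 0 < b * l := by positivity
  have hk1 : k < 1 := by nlinarith
  have hmd : 0 < m * (y - x) := by positivity
  have slide : ∀ s σ L : ℝ, s ≤ x → 0 < σ → σ ^ 2 = (s - (c + b * k)) ^ 2 + (b * l) ^ 2 →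
      σ ≤ L → y - s ≤ L → m * (y - x) * σ < L ^ 2 ∨ (m * (y - x) * σ = L ^ 2 ∧ s = x ∧
        (ρ < y - x ∧ L = y - x ∨ y - x < ρ ∧ L = ρ)) := by
    intro s σ L hs hσ hσ2 hσL hyL
    have e : y - (c + b * k) - (x - (c + b * k)) = y - x := by ring
    have hρ2' : ρ ^ 2 = (x - (c + b * k)) ^ 2 + (b * l) ^ 2 := by rw [hρ2]; ring
    rcases lt_or_gt_of_ne hne with h | h
    · have := sliding_bound_far (s := s - (c + b * k)) (x := x - (c + b * k)) (y := y - (c + b * k))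
        (L := L) (m := m) (by linarith) (by linarith) hh hσ hσ2 hρ hρ2' hσL (by linarith) hm2
        (by linarith) (by rw [e]; exact (hfar h).1)
      rw [e] at this
      rcases this with h1 | ⟨h1, h2, h3⟩
      · exact Or.inl h1
      · exact Or.inr ⟨h1, by linarith, Or.inl ⟨h, h3⟩⟩
    · have := sliding_bound_near (s := s - (c + b * k)) (x := x - (c + b * k)) (y := y - (c + b * k))
        (L := L) (m := m) (by linarith) (by linarith) hh hσ hσ2 hρ hρ2' hσL (by linarith)
        (by linarith) (by rw [e]; exact hnear h)
      rw [e] at this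
      rcases this with h1 | ⟨h1, h2, h3⟩
      · exact Or.inl h1
      · exact Or.inr ⟨h1, by linarith, Or.inr ⟨h, h3⟩⟩
  by_cases hA : 0 < c ∧ c + 2 * b * k ≤ 0
  · obtain ⟨hc0, hck⟩ := hA
    have hk0 : k < 0 := by nlinarith
    rcases lt_or_ge x c with hxc | hxc
    · have hlg : b * l * ((1 - k) / l) = b * (1 - k) := by field_simp
      have hg2 : b * l * (1 + ((1 - k) / l) ^ 2) = b * (2 * ((1 - k) / l)) := by
        field_simp
        linear_combination hkl
      have hg0 : 0 < 2 * ((1 - k) / l) := by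
        have : 0 < 1 - k := by linarith
        positivity
      have key := obtuse_apex_bound (m := m) (d := y - x) (p := c + b * k - x) (h := b * l)
        (ρ := ρ) (g := (1 - k) / l) (L := 1 - x) hd hh hρ hρ2 (by linarith)
        (by rw [hlg]; linarith)
        (by
          rw [hlg]
          have : ρ < b + c - x := by
            apply lt_of_pow_lt_pow_left₀ 2 (by linarith)
            rw [hρ2]
            nlinarith [mul_pos (mul_pos hb (sub_pos.mpr hxc)) (sub_pos.mpr hk1)]
          linarith)
        (by
          rw [hlg]
          have : ρ ≤ b - 2 * b * k - (c - x) := by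
            refine le_of_sq_le_sq ?_ (by nlinarith)
            rw [hρ2]
            have : 0 ≤ 2 * b * ((1 - k) * (-(2 * b * k) - (c - x))) := by
              apply mul_nonneg (by positivity)
              exact mul_nonneg (by linarith) (by linarith)
            nlinarith
          linarith)
        (by
          intro h
          have := hfar h
          rw [show y - x - (c + b * k - x) = y - (c + b * k) by ring]
          exact this)
        (fun h => (hnear h).1) hne
      have e1 : m * (y - x) * (b * l) * (1 + ((1 - k) / l) ^ 2)
          = m * (y - x) * b * (2 * ((1 - k) / l)) := by
        rw [mul_assoc, hg2]; ring
      rw [e1, hlg] at key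
      have hx1 : (1 - x) ^ 2 ≤ 1 := by nlinarith
      rcases key with h1 | ⟨h1, h2, h3, h4⟩
      · left
        exact (lt_of_mul_lt_mul_right h1 hg0.le).trans_le hx1
      · have h5 := mul_right_cancel₀ hg0.ne' h1
        rcases eq_or_lt_of_le hx with rfl | hx0
        · right
          exact ⟨by linarith, rfl, Or.inr (Or.inr ⟨by linarith, by linarith, h3⟩)⟩
        · left
          nlinarith
    · left
      have hlt : (1 - c) ^ 2 < 1 := by nlinarith
      refine lt_of_le_of_lt ?_ hlt
      rcases slide c b (1 - c) hxc hb (by linear_combination -b ^ 2 * hkl) (by linarith)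
        (by linarith) with h | h
      · exact h.le
      · exact h.1.le
  · have hσ2' : 0 < (c + b * k) ^ 2 + (b * l) ^ 2 := by positivity
    have hσ0 := Real.sqrt_pos.mpr hσ2'
    have hσ2 := Real.sq_sqrt hσ2'.le
    set σ := Real.sqrt ((c + b * k) ^ 2 + (b * l) ^ 2)
    have hσe : σ ^ 2 = b ^ 2 + c * (c + 2 * b * k) := by
      rw [hσ2]; linear_combination b ^ 2 * hkl
    have hbσ : b ≤ σ ∧ (b = σ → c = 0) := by
      rcases eq_or_lt_of_le hc with rfl | hc0
      · refine ⟨?_, fun _ => rfl⟩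
        exact le_of_sq_le_sq (by rw [hσe]; linarith) hσ0.le
      · have : 0 < c + 2 * b * k := by
          by_contra h
          exact hA ⟨hc0, by linarith⟩
        have : b < σ := by
          apply lt_of_pow_lt_pow_left₀ 2 hσ0.le
          rw [hσe]
          have := mul_pos hc0 this
          linarith
        exact ⟨this.le, fun h => absurd h this.ne⟩
    have hσ1 : σ ≤ 1 := by
      refine le_trans ?_ hbc
      refine le_of_sq_le_sq ?_ (by linarith)
      rw [hσe]
      nlinarith [mul_nonneg (mul_nonneg hb.le hc) (sub_nonneg.mpr hk1.le)]
    have key := slide 0 σ 1 hx hσ0 (by rw [hσ2]; ring) hσ1 (by linarith)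
    rcases eq_or_lt_of_le hbσ.1 with e | hlt
    · have hc0 := hbσ.2 e
      rw [← e] at key
      rcases key with h | ⟨h1, h2, h3⟩
      · left; linarith
      · right
        refine ⟨by linarith, h2.symm, ?_⟩
        rcases h3 with ⟨h3, h4⟩ | ⟨h3, h4⟩
        · exact Or.inl ⟨by linarith, hc0, h3⟩
        · refine Or.inr (Or.inl ⟨hc0, ?_, h3⟩)
          subst hc0
          subst h2
          rw [← h4] at hρ2
          have : b ^ 2 = 1 := by linear_combination -hρ2 - b ^ 2 * hkl
          exact (pow_eq_one_iff_of_nonneg hb.le two_ne_zero).mp this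
    · left
      have h1 : m * (y - x) * b < m * (y - x) * σ := by gcongr
      refine h1.trans_le ?_
      rcases key with h | h
      · linarith
      · linarith [h.1]

/-- The base case, with the base scaled to `[0, 1]`. -/
lemma base_bound {m x y b c : ℝ} (hx : 0 ≤ x) (hy : y ≤ 1) (hb : 0 < b) (hc : 0 ≤ c)
    (hbc : b + c ≤ 1) (hright : (c + b / 2 - x) ^ 2 < (y - (c + b / 2)) ^ 2 →
      m * (y - x) ≤ 2 * (y - (c + b / 2)))
    (hleft : (y - (c + b / 2)) ^ 2 < (c + b / 2 - x) ^ 2 → m * (y - x) ≤ 2 * (c + b / 2 - x))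
    (hne : (c + b / 2 - x) ^ 2 ≠ (y - (c + b / 2)) ^ 2) :
    m * (y - x) * b < 1 ∨ (m * (y - x) * b = 1 ∧ b = 1 ∧ c = 0 ∧
      ((c + b / 2 - x) ^ 2 < (y - (c + b / 2)) ^ 2 ∧ y = 1 ∨
        (y - (c + b / 2)) ^ 2 < (c + b / 2 - x) ^ 2 ∧ x = 0)) := by
  have h1 : (2 - b) * b ≤ 1 := by nlinarith [sq_nonneg (b - 1)]
  rcases eq_or_lt_of_le (show b ≤ 1 by linarith) with rfl | hb1
  · have hc0 : c = 0 := by linarith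
    subst hc0
    rcases lt_or_gt_of_ne hne with h | h
    · have := hright h
      rcases eq_or_lt_of_le hy with e | hlt
      · rcases eq_or_lt_of_le (show m * (y - x) * 1 ≤ 1 by linarith) with e' | h'
        · exact Or.inr ⟨e', rfl, rfl, Or.inl ⟨h, e⟩⟩
        · exact Or.inl h'
      · left; linarith
    · have := hleft h
      rcases eq_or_lt_of_le hx with e | hlt
      · rcases eq_or_lt_of_le (show m * (y - x) * 1 ≤ 1 by linarith) with e' | h'
        · exact Or.inr ⟨e', rfl, rfl, Or.inr ⟨h, e.symm⟩⟩
        · exact Or.inl h'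
      · left; linarith
  · left
    have h2 : (2 - b) * b < 1 := by nlinarith [mul_pos (sub_pos.mpr hb1) (sub_pos.mpr hb1)]
    refine lt_of_le_of_lt ?_ h2
    gcongr
    rcases lt_or_gt_of_ne hne with h | h
    · have := hright h
      linarith
    · have := hleft h
      linarith

/-- Twice the signed area of the triangle `A B C`. -/
def cr (A B C : Pt) : ℝ := (B 0 - A 0) * (C 1 - A 1) - (B 1 - A 1) * (C 0 - A 0)

lemma dist_sq_eq (A B : Pt) : dist A B ^ 2 = (A 0 - B 0) ^ 2 + (A 1 - B 1) ^ 2 := by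
  rw [EuclideanSpace.dist_eq, Real.sq_sqrt (by positivity), Fin.sum_univ_two]
  simp [Real.dist_eq, sq_abs]

lemma cr_swap_right (A B C : Pt) : cr A C B = -cr A B C := by unfold cr; ring

lemma cr_rotate (A B C : Pt) : cr B C A = cr A B C := by unfold cr; ring

lemma tri_swap_right (A B C : Pt) : tri A C B = tri A B C := by
  unfold tri; rw [Set.pair_comm]

lemma tri_rotate (A B C : Pt) : tri B C A = tri A B C := by
  unfold tri
  congr 1
  ext x
  simp only [Set.mem_insert_iff, Set.mem_singleton_iff]
  tauto

lemma mem_tri {A B C V : Pt} : V ∈ tri A B C ↔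
    ∃ a b c : ℝ, 0 ≤ a ∧ 0 ≤ b ∧ 0 ≤ c ∧ a + b + c = 1 ∧ V = a • A + b • B + c • C := by
  unfold tri
  constructor
  · intro h
    rw [convexHull_insert (Set.insert_nonempty _ _), mem_convexJoin] at h
    obtain ⟨A', hA', W, hW, hV⟩ := h
    rw [Set.mem_singleton_iff] at hA'
    subst hA'
    rw [convexHull_pair] at hW
    obtain ⟨s, t, hs, ht, hst, rfl⟩ := hW
    obtain ⟨u, v, hu, hv, huv, rfl⟩ := hV
    refine ⟨u, v * s, v * t, hu, by positivity, by positivity, ?_, ?_⟩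
    · linear_combination huv + v * hst
    · simp only [smul_add, mul_smul, add_assoc]
  · rintro ⟨a, b, c, ha, hb, hc, habc, rfl⟩
    have hA : A ∈ convexHull ℝ {A, B, C} := subset_convexHull ℝ _ (by simp)
    have hB : B ∈ convexHull ℝ {A, B, C} := subset_convexHull ℝ _ (by simp)
    have hC : C ∈ convexHull ℝ {A, B, C} := subset_convexHull ℝ _ (by simp)
    have h := (convex_convexHull ℝ {A, B, C}).sum_mem (t := Finset.univ) (w := ![a, b, c])
      (z := ![A, B, C]) (by intro i _; fin_cases i <;> simpa)
      (by simpa [Fin.sum_univ_three] using habc) (by intro i _; fin_cases i <;> simpa)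
    simpa [Fin.sum_univ_three] using h

lemma tri_subset_iff {A B C S P R : Pt} : tri A B C ⊆ tri S P R ↔
    A ∈ tri S P R ∧ B ∈ tri S P R ∧ C ∈ tri S P R := by
  constructor
  · intro h
    exact ⟨h (subset_convexHull ℝ _ (by simp)), h (subset_convexHull ℝ _ (by simp)),
      h (subset_convexHull ℝ _ (by simp))⟩
  · rintro ⟨hA, hB, hC⟩
    refine convexHull_min ?_ (convex_convexHull ℝ _)
    intro x hx
    simp only [Set.mem_insert_iff, Set.mem_singleton_iff] at hx
    rcases hx with rfl | rfl | rfl <;> assumption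

lemma pt_ext {A B : Pt} (h0 : A 0 = B 0) (h1 : A 1 = B 1) : A = B := by
  ext i; fin_cases i <;> assumption

lemma affineIndependent_iff_cr_ne_zero {A B C : Pt} :
    AffineIndependent ℝ ![A, B, C] ↔ cr A B C ≠ 0 := by
  rw [affineIndependent_iff_not_collinear_set, not_iff_not, collinear_iff_of_mem (p₀ := A) (by simp)]
  constructor
  · rintro ⟨v, hv⟩
    obtain ⟨r, hr⟩ := hv B (by simp)
    obtain ⟨s, hs⟩ := hv C (by simp)
    rw [hr, hs]
    simp [cr]
    ring
  · intro h
    by_cases hBA : B = A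
    · refine ⟨C - A, ?_⟩
      intro p hp
      simp only [Set.mem_insert_iff, Set.mem_singleton_iff] at hp
      rcases hp with rfl | rfl | rfl
      · exact ⟨0, by simp⟩
      · exact ⟨0, by simp [hBA]⟩
      · exact ⟨1, by simp⟩
    · refine ⟨B - A, ?_⟩
      have hN : (B 0 - A 0) ^ 2 + (B 1 - A 1) ^ 2 ≠ 0 := by
        rw [← dist_sq_eq]
        exact pow_ne_zero 2 (dist_ne_zero.mpr hBA)
      intro p hp
      simp only [Set.mem_insert_iff, Set.mem_singleton_iff] at hp
      rcases hp with rfl | rfl | rfl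
      · exact ⟨0, by simp⟩
      · exact ⟨1, by simp⟩
      · refine ⟨((B 0 - A 0) * (p 0 - A 0) + (B 1 - A 1) * (p 1 - A 1)) /
          ((B 0 - A 0) ^ 2 + (B 1 - A 1) ^ 2), ?_⟩
        unfold cr at h
        apply pt_ext
        · simp only [vadd_eq_add, PiLp.add_apply, PiLp.smul_apply, PiLp.sub_apply, smul_eq_mul]
          field_simp
          linear_combination (-(B 1 - A 1)) * h
        · simp only [vadd_eq_add, PiLp.add_apply, PiLp.smul_apply, PiLp.sub_apply, smul_eq_mul]
          field_simp
          linear_combination (B 0 - A 0) * h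

/-- Areas of triangles are a fixed multiple of `|cr|`. -/
lemma exists_triArea_eq :
    ∃ κ : ℝ, 0 < κ ∧ ∀ A B C : Pt, triArea A B C = κ * |cr A B C| := by
  let e₀ : Pt := !₂[1, 0]
  let e₁ : Pt := !₂[0, 1]
  refine ⟨(volume (tri 0 e₀ e₁)).toReal, ?_, ?_⟩
  · apply ENNReal.toReal_pos
    · have hnonempty : (interior (tri 0 e₀ e₁)).Nonempty := by
        have hai : AffineIndependent ℝ ![0, e₀, e₁] := by
          rw [affineIndependent_iff_cr_ne_zero]
          simp [cr, e₀, e₁]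
        unfold tri
        rw [interior_convexHull_nonempty_iff_affineSpan_eq_top]
        have h := (hai.affineSpan_eq_top_iff_card_eq_finrank_add_one).mpr (by simp)
        rw [← h]
        congr 1
        ext x
        simp only [Matrix.range_cons, Matrix.range_empty, Set.mem_union, Set.mem_singleton_iff,
          Set.mem_insert_iff, Set.mem_empty_iff_false]
        tauto
      intro h0
      have := (isOpen_interior.measure_pos volume hnonempty).ne'
      exact this (measure_mono_null interior_subset h0)
    · unfold tri
      exact (Set.Finite.isCompact_convexHull ℝ (by simp)).measure_lt_top.ne
  · intro A B C
    let b := (EuclideanSpace.basisFun (Fin 2) ℝ).toBasis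
    let M : Matrix (Fin 2) (Fin 2) ℝ := !![B 0 - A 0, C 0 - A 0; B 1 - A 1, C 1 - A 1]
    let f : Pt →ₗ[ℝ] Pt := Matrix.toLin b b M
    have hdet : LinearMap.det f = cr A B C := by
      simp only [f, LinearMap.det_toLin, M, Matrix.det_fin_two_of, cr]
      ring
    have hf : ∀ v : Pt, f v = v 0 • (B - A) + v 1 • (C - A) := by
      intro v
      apply pt_ext <;>
        simp [f, Matrix.toLin_apply, b, M, Matrix.mulVec, dotProduct] <;> ring
    have himg : tri A B C = (fun x => A + x) '' (f '' tri 0 e₀ e₁) := by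
      ext V
      rw [Set.mem_image]
      simp only [Set.mem_image, exists_exists_and_eq_and, mem_tri, hf]
      constructor
      · rintro ⟨p, q, r, hp, hq, hr, hs, rfl⟩
        refine ⟨q • e₀ + r • e₁, ⟨p, q, r, hp, hq, hr, hs, by simp⟩, ?_⟩
        obtain rfl : p = 1 - q - r := by linarith
        apply pt_ext <;> simp [e₀, e₁] <;> ring
      · rintro ⟨_, ⟨p, q, r, hp, hq, hr, hs, rfl⟩, rfl⟩
        refine ⟨p, q, r, hp, hq, hr, hs, ?_⟩
        obtain rfl : p = 1 - q - r := by linarith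
        apply pt_ext <;> simp [e₀, e₁] <;> ring
    unfold triArea
    rw [himg]
    simp only [Set.image_add_left, measure_preimage_add, Measure.addHaar_image_linearMap, hdet,
      ENNReal.toReal_mul, ENNReal.toReal_ofReal (abs_nonneg _)]
    ring

/-- The scaled inequalities satisfied by an admissible ratio `m` at the sides `X Y`, `X Z`. -/
def BndAt (m : ℝ) (X Y Z : Pt) : Prop :=
  dist X Z < dist X Y → m * dist X Z ≤ dist X Y ∧
    m * dist Y Z ^ 2 ≤ dist X Y ^ 2 + dist Y Z ^ 2 - dist X Z ^ 2

/-- The special isosceles containers of area ratio `m` sharing the side `X Y` with `X Y Z`. -/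
def SpecAt (m : ℝ) (X Y Z : Pt) (D : Set Pt) : Prop :=
  dist X Z < dist X Y ∧
    ((m * dist X Z = dist X Y ∧ D = tri X Y (X + m • (Z - X))) ∨
      (m * dist Y Z ^ 2 = dist X Y ^ 2 + dist Y Z ^ 2 - dist X Z ^ 2 ∧
        D = tri Y X (Y + m • (Z - Y))))

lemma exists_smul_of_cr_eq_zero {S P R X : Pt} (hD : cr S P R ≠ 0) (hX : X ∈ tri S P R)
    (h : cr S R X = 0) : ∃ x : ℝ, 0 ≤ x ∧ x ≤ 1 ∧ X = S + x • (R - S) := by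
  obtain ⟨a, b, c, ha, hb, hc, hs, rfl⟩ := mem_tri.mp hX
  obtain rfl : a = 1 - b - c := by linarith
  have hb0 : b * cr S P R = 0 := by
    simp only [cr, PiLp.add_apply, PiLp.smul_apply, smul_eq_mul] at h ⊢
    linear_combination -h
  obtain rfl : b = 0 := by simpa [hD] using hb0
  refine ⟨c, hc, by linarith, ?_⟩
  apply pt_ext <;> simp <;> ring

lemma exists_smul_add_smul {S P R X : Pt} (hX : X ∈ tri S P R) :
    ∃ b c : ℝ, 0 ≤ b ∧ 0 ≤ c ∧ b + c ≤ 1 ∧ X = S + b • (P - S) + c • (R - S) := by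
  obtain ⟨a, b, c, ha, hb, hc, hs, rfl⟩ := mem_tri.mp hX
  obtain rfl : a = 1 - b - c := by linarith
  refine ⟨b, c, hb, hc, by linarith, ?_⟩
  apply pt_ext <;> simp <;> ring

lemma dist_of_eq_add_smul {S R X Y : Pt} {x y : ℝ} (hX : X = S + x • (R - S))
    (hY : Y = S + y • (R - S)) (hxy : x ≤ y) : dist X Y = (y - x) * dist S R := by
  rw [hX, hY, dist_add_left, dist_comm, dist_eq_norm, ← sub_smul, norm_smul,
    Real.norm_of_nonneg (sub_nonneg.mpr hxy), dist_comm, dist_eq_norm]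

lemma dist_add_smul_sub {S R : Pt} {m : ℝ} (hm : 0 ≤ m) :
    dist S (S + m • (R - S)) = m * dist S R := by
  rw [dist_self_add_right, norm_smul, Real.norm_of_nonneg hm, dist_comm S R, dist_eq_norm]

lemma dist_pos_of_cr_ne_zero {A B C : Pt} (h : cr A B C ≠ 0) : 0 < dist A B := by
  refine dist_pos.mpr ?_
  rintro rfl
  exact h (by unfold cr; ring)

lemma leg_flush {m : ℝ} {X Y Z S P R : Pt} (hm0 : 0 < m) (hm2 : m < 2)
    (hiso : dist S P = dist S R) (hD : cr S P R ≠ 0) (hX : X ∈ tri S P R) (hY : Y ∈ tri S P R)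
    (hZ : Z ∈ tri S P R) (hcX : cr S R X = 0) (hcY : cr S R Y = 0) (hXY : dist S X < dist S Y)
    (hT : cr X Y Z ≠ 0) (hfar : BndAt m X Y Z) (hnear : BndAt m X Z Y)
    (hne : dist X Z ≠ dist X Y) :
    m * |cr X Y Z| < |cr S P R| ∨ (m * |cr X Y Z| = |cr S P R| ∧
      (SpecAt m X Y Z (tri S P R) ∨ SpecAt m X Z Y (tri S P R))) := by
  obtain ⟨x, hx0, hx1, hXe⟩ := exists_smul_of_cr_eq_zero hD hX hcX
  obtain ⟨y, hy0, hy1, hYe⟩ := exists_smul_of_cr_eq_zero hD hY hcY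
  obtain ⟨b, c, hb0, hc0, hbc, hZe⟩ := exists_smul_add_smul hZ
  obtain ⟨L, hL⟩ : ∃ L, L = dist S R := ⟨_, rfl⟩
  have hX0 : X 0 = S 0 + x * (R 0 - S 0) := by simp [hXe]
  have hX1 : X 1 = S 1 + x * (R 1 - S 1) := by simp [hXe]
  have hY0 : Y 0 = S 0 + y * (R 0 - S 0) := by simp [hYe]
  have hY1 : Y 1 = S 1 + y * (R 1 - S 1) := by simp [hYe]
  have hZ0 : Z 0 = S 0 + b * (P 0 - S 0) + c * (R 0 - S 0) := by simp [hZe]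
  have hZ1 : Z 1 = S 1 + b * (P 1 - S 1) + c * (R 1 - S 1) := by simp [hZe]
  have hLR := dist_sq_eq S R
  rw [← hL] at hLR
  have hLP := dist_sq_eq S P
  rw [hiso, ← hL] at hLP
  have hLpos : 0 < L := by
    rw [hL, ← hiso]
    exact dist_pos_of_cr_ne_zero hD
  have hSX : dist S X = x * L := by
    have := dist_of_eq_add_smul (X := S) (x := 0) (by simp) hXe hx0
    rwa [sub_zero, ← hL] at this
  have hSY : dist S Y = y * L := by
    have := dist_of_eq_add_smul (X := S) (x := 0) (by simp) hYe hy0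
    rwa [sub_zero, ← hL] at this
  have hxy : x < y := by
    rw [hSX, hSY] at hXY
    exact lt_of_mul_lt_mul_right hXY hLpos.le
  have hdXY : dist X Y = (y - x) * L := hL ▸ dist_of_eq_add_smul hXe hYe hxy.le
  obtain ⟨k, hk⟩ : ∃ k, k * L ^ 2 = (P 0 - S 0) * (R 0 - S 0) + (P 1 - S 1) * (R 1 - S 1) :=
    ⟨_, div_mul_cancel₀ _ (by positivity)⟩
  obtain ⟨l, hl⟩ : ∃ l, l * L ^ 2 = |cr S P R| := ⟨_, div_mul_cancel₀ _ (by positivity)⟩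
  have hlpos : 0 < l := by
    have := abs_pos.mpr hD
    rw [← hl] at this
    exact pos_of_mul_pos_left this (by positivity)
  have hl2 : (l * L ^ 2) ^ 2 = ((P 0 - S 0) * (R 1 - S 1) - (P 1 - S 1) * (R 0 - S 0)) ^ 2 := by
    rw [hl, sq_abs, cr]
  have hkl : k ^ 2 + l ^ 2 = 1 := by
    have h4 : (k * L ^ 2) ^ 2 + (l * L ^ 2) ^ 2 = L ^ 2 * L ^ 2 := by
      rw [hl2, hk]
      nth_rewrite 1 [hLR]
      rw [hLP]
      ring
    have hL4 : L ^ 2 * L ^ 2 ≠ 0 := by positivity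
    apply mul_right_cancel₀ hL4
    linear_combination h4
  have hdist : ∀ (w : ℝ) (W : Pt), W 0 = S 0 + w * (R 0 - S 0) → W 1 = S 1 + w * (R 1 - S 1) →
      dist W Z ^ 2 = L ^ 2 * ((w - (c + b * k)) ^ 2 + (b * l) ^ 2) := by
    intro w W h0 h1
    have e1 : L ^ 2 * ((w - (c + b * k)) ^ 2 + (b * l) ^ 2) =
        L ^ 2 * (w - c) ^ 2 - 2 * (w - c) * b * (k * L ^ 2) + b ^ 2 * L ^ 2 * (k ^ 2 + l ^ 2) := by
      ring
    rw [e1, hkl, hk, dist_sq_eq, h0, h1, hZ0, hZ1]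
    linear_combination -(w - c) ^ 2 * hLR - b ^ 2 * hLP
  have hXZ := hdist x X hX0 hX1
  have hYZ := hdist y Y hY0 hY1
  have hcr : cr X Y Z = -((y - x) * b * cr S P R) := by
    unfold cr
    rw [hX0, hX1, hY0, hY1, hZ0, hZ1]
    ring
  have hbne : b ≠ 0 := by
    rintro rfl
    exact hT (by rw [hcr]; ring)
  have hbpos : 0 < b := lt_of_le_of_ne hb0 hbne.symm
  have hcrabs : |cr X Y Z| = (y - x) * b * |cr S P R| := by
    rw [hcr, abs_neg, abs_mul, abs_of_pos (mul_pos (sub_pos.mpr hxy) hbpos)]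
  obtain ⟨ρ, hρ⟩ : ∃ ρ, ρ * L = dist X Z := ⟨_, div_mul_cancel₀ _ hLpos.ne'⟩
  have hρpos : 0 < ρ := by
    have hXZne : X ≠ Z := by
      rintro rfl
      exact hT (by unfold cr; ring)
    have := dist_pos.mpr hXZne
    rw [← hρ] at this
    exact pos_of_mul_pos_left this hLpos.le
  have hL2 : 0 < L ^ 2 := by positivity
  have hρ2 : ρ ^ 2 = (c + b * k - x) ^ 2 + (b * l) ^ 2 := by
    rw [← hρ] at hXZ
    apply mul_left_cancel₀ hL2.ne'
    linear_combination hXZ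
  have hDpos := abs_pos.mpr hD
  have key := leg_bound (m := m) hx0 hxy hy1 hbpos hc0 hbc hkl hlpos hρpos hρ2 hm0 hm2
    (by
      intro h
      have h' : dist X Z < dist X Y := by
        rw [← hρ, hdXY]; exact mul_lt_mul_of_pos_right h hLpos
      obtain ⟨h1, h2⟩ := hfar h'
      constructor
      · rw [← hρ, hdXY] at h1
        exact le_of_mul_le_mul_right (by linarith) hLpos
      · rw [hdXY, hXZ, hYZ] at h2
        refine le_of_mul_le_mul_left ?_ hL2
        linarith)
    (by
      intro h
      have h' : dist X Y < dist X Z := by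
        rw [← hρ, hdXY]; exact mul_lt_mul_of_pos_right h hLpos
      obtain ⟨h1, h2⟩ := hnear h'
      constructor
      · rw [← hρ, hdXY] at h1
        exact le_of_mul_le_mul_right (by linarith) hLpos
      · rw [dist_comm Z Y, hdXY, hXZ, hYZ] at h2
        refine le_of_mul_le_mul_left ?_ hL2
        linarith)
    (by
      intro h
      apply hne
      rw [← hρ, hdXY, h])
  rcases key with h | ⟨h, hx, hcase⟩
  · left
    rw [hcrabs]
    have := mul_lt_mul_of_pos_right h hDpos
    linarith
  · right
    refine ⟨by rw [hcrabs]; linear_combination |cr S P R| * h, ?_⟩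
    subst hx
    have hSX' : S = X := by simp [hXe]
    rcases hcase with ⟨hy, hc, hr⟩ | ⟨hc, hb, hr⟩ | ⟨hy, hbc1, hr⟩
    · left
      subst hy hc
      have hRY : R = Y := by simp [hYe]
      have hr' : dist X Z < dist X Y := by
        rw [← hρ, hdXY]; exact mul_lt_mul_of_pos_right hr hLpos
      have hmb : m * b = 1 := by linear_combination h
      have hPe : P = X + m • (Z - X) := by
        rw [← hSX', hZe]
        simp only [zero_smul, add_zero, add_sub_cancel_left, smul_smul, hmb, one_smul]
        abel
      refine ⟨hr', Or.inl ⟨?_, ?_⟩⟩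
      · have hXP : dist X P = m * dist X Z := by
          rw [hPe, dist_self_add_right, norm_smul, Real.norm_of_nonneg hm0.le, dist_comm X Z,
            dist_eq_norm]
        rw [← hXP, ← hSX', ← hRY, hiso]
      · rw [← tri_swap_right, hPe, hSX', hRY]
    · right
      subst hc hb
      have hPZ : P = Z := by rw [hZe]; simp
      have hr' : dist X Y < dist X Z := by
        rw [← hρ, hdXY]; exact mul_lt_mul_of_pos_right hr hLpos
      have hmb : m * y = 1 := by linear_combination h
      have hRe : R = X + m • (Y - X) := by
        rw [← hSX', hYe]
        simp only [add_sub_cancel_left, smul_smul, hmb, one_smul]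
        abel
      refine ⟨hr', Or.inl ⟨?_, ?_⟩⟩
      · have hXP : dist X R = m * dist X Y := by
          rw [hRe, dist_self_add_right, norm_smul, Real.norm_of_nonneg hm0.le, dist_comm X Y,
            dist_eq_norm]
        rw [← hXP, ← hSX', ← hPZ, hiso]
      · rw [← hRe, ← hSX', hPZ]
    · left
      subst hy
      have hRY : R = Y := by simp [hYe]
      have hr' : dist X Z < dist X Y := by
        rw [← hρ, hdXY]; exact mul_lt_mul_of_pos_right hr hLpos
      have hmb : m * b = 1 := by linear_combination h
      obtain rfl : c = 1 - b := by linarith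
      have hPe : P = Y + m • (Z - Y) := by
        have : S + b • (P - S) + (1 - b) • (R - S) - R = b • (P - R) := by module
        rw [← hRY, hZe, this, smul_smul, hmb, one_smul]
        abel
      refine ⟨hr', Or.inr ⟨?_, ?_⟩⟩
      · rw [hdXY, hXZ, hYZ]
        linear_combination L ^ 2 * b * ((1 - k) ^ 2 + l ^ 2) * hmb + L ^ 2 * b * hkl
      · rw [← hPe, ← hRY, ← hSX', tri_rotate, tri_swap_right]

lemma base_flush {m : ℝ} {X Y Z S P R : Pt}
    (hiso : dist S P = dist S R) (hD : cr S P R ≠ 0) (hX : X ∈ tri S P R) (hY : Y ∈ tri S P R)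
    (hZ : Z ∈ tri S P R) (hcX : cr P R X = 0) (hcY : cr P R Y = 0) (hXY : dist P X < dist P Y)
    (hT : cr X Y Z ≠ 0) (hright : BndAt m Z Y X) (hleft : BndAt m Z X Y)
    (hne : dist Z X ≠ dist Z Y) :
    m * |cr X Y Z| < |cr S P R| ∨ (m * |cr X Y Z| = |cr S P R| ∧
      (SpecAt m Z Y X (tri S P R) ∨ SpecAt m Z X Y (tri S P R))) := by
  have hD' : cr P S R ≠ 0 := by
    rw [← cr_rotate, cr_swap_right]
    exact neg_ne_zero.mpr hD
  have htri : tri S P R = tri P S R := by rw [← tri_rotate, tri_swap_right]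
  rw [htri] at hX hY hZ
  obtain ⟨x, hx0, hx1, hXe⟩ := exists_smul_of_cr_eq_zero hD' hX hcX
  obtain ⟨y, hy0, hy1, hYe⟩ := exists_smul_of_cr_eq_zero hD' hY hcY
  obtain ⟨b, c, hb0, hc0, hbc, hZe⟩ := exists_smul_add_smul hZ
  obtain ⟨L, hL⟩ : ∃ L, L = dist P R := ⟨_, rfl⟩
  have hX0 : X 0 = P 0 + x * (R 0 - P 0) := by simp [hXe]
  have hX1 : X 1 = P 1 + x * (R 1 - P 1) := by simp [hXe]
  have hY0 : Y 0 = P 0 + y * (R 0 - P 0) := by simp [hYe]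
  have hY1 : Y 1 = P 1 + y * (R 1 - P 1) := by simp [hYe]
  have hZ0 : Z 0 = P 0 + b * (S 0 - P 0) + c * (R 0 - P 0) := by simp [hZe]
  have hZ1 : Z 1 = P 1 + b * (S 1 - P 1) + c * (R 1 - P 1) := by simp [hZe]
  have hLR := dist_sq_eq P R
  rw [← hL] at hLR
  have hLpos : 0 < L := by
    rw [hL]
    refine dist_pos_of_cr_ne_zero (C := S) ?_
    rwa [cr_rotate]
  have hiso2 : (S 0 - P 0) ^ 2 + (S 1 - P 1) ^ 2 = (S 0 - R 0) ^ 2 + (S 1 - R 1) ^ 2 := by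
    rw [← dist_sq_eq, ← dist_sq_eq, hiso]
  have hPX : dist P X = x * L := by
    have := dist_of_eq_add_smul (X := P) (x := 0) (by simp) hXe hx0
    rwa [sub_zero, ← hL] at this
  have hPY : dist P Y = y * L := by
    have := dist_of_eq_add_smul (X := P) (x := 0) (by simp) hYe hy0
    rwa [sub_zero, ← hL] at this
  have hxy : x < y := by
    rw [hPX, hPY] at hXY
    exact lt_of_mul_lt_mul_right hXY hLpos.le
  have hdXY : dist X Y = (y - x) * L := hL ▸ dist_of_eq_add_smul hXe hYe hxy.le
  obtain ⟨h, hh⟩ : ∃ h, h = b ^ 2 * ((S 0 - P 0) ^ 2 + (S 1 - P 1) ^ 2 - L ^ 2 / 4) := ⟨_, rfl⟩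
  have hdist : ∀ (w : ℝ) (W : Pt), W 0 = P 0 + w * (R 0 - P 0) → W 1 = P 1 + w * (R 1 - P 1) →
      dist Z W ^ 2 = L ^ 2 * (c + b / 2 - w) ^ 2 + h := by
    intro w W h0 h1
    rw [hh, dist_sq_eq, h0, h1, hZ0, hZ1]
    linear_combination (b * (c - w) + (c - w) ^ 2 - (c + b / 2 - w) ^ 2 + b ^ 2 / 4 - b * (c - w)
      - (c - w) ^ 2) * hLR + b * (c - w) * hiso2
  have hXZ := hdist x X hX0 hX1
  have hYZ := hdist y Y hY0 hY1
  have hcr : cr X Y Z = (y - x) * b * cr S P R := by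
    unfold cr
    rw [hX0, hX1, hY0, hY1, hZ0, hZ1]
    ring
  have hbne : b ≠ 0 := by
    rintro rfl
    exact hT (by rw [hcr]; ring)
  have hbpos : 0 < b := lt_of_le_of_ne hb0 hbne.symm
  have hcrabs : |cr X Y Z| = (y - x) * b * |cr S P R| := by
    rw [hcr, abs_mul, abs_of_pos (mul_pos (sub_pos.mpr hxy) hbpos)]
  have hL2 : 0 < L ^ 2 := by positivity
  have hDpos := abs_pos.mpr hD
  have hltR : (c + b / 2 - x) ^ 2 < (y - (c + b / 2)) ^ 2 → dist Z X < dist Z Y := by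
    intro hlt
    refine lt_of_pow_lt_pow_left₀ 2 dist_nonneg ?_
    rw [hXZ, hYZ]
    have := mul_lt_mul_of_pos_left hlt hL2
    linarith
  have hltL : (y - (c + b / 2)) ^ 2 < (c + b / 2 - x) ^ 2 → dist Z Y < dist Z X := by
    intro hlt
    refine lt_of_pow_lt_pow_left₀ 2 dist_nonneg ?_
    rw [hXZ, hYZ]
    have := mul_lt_mul_of_pos_left hlt hL2
    linarith
  have hyx : 0 < L ^ 2 * (y - x) := mul_pos hL2 (sub_pos.mpr hxy)
  have key := base_bound (m := m) hx0 hy1 hbpos hc0 hbc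
    (by
      intro hlt
      obtain ⟨-, h2⟩ := hright (hltR hlt)
      rw [dist_comm Y X, hdXY, hXZ, hYZ] at h2
      refine le_of_mul_le_mul_left ?_ hyx
      linarith)
    (by
      intro hlt
      obtain ⟨-, h2⟩ := hleft (hltL hlt)
      rw [hdXY, hXZ, hYZ] at h2
      refine le_of_mul_le_mul_left ?_ hyx
      linarith)
    (by
      intro heq
      apply hne
      refine (pow_left_inj₀ dist_nonneg dist_nonneg two_ne_zero).mp ?_
      rw [hXZ, hYZ]
      linear_combination L ^ 2 * heq)
  rcases key with hlt | ⟨heq, rfl, rfl, hcase⟩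
  · left
    rw [hcrabs]
    have := mul_lt_mul_of_pos_right hlt hDpos
    linarith
  · right
    refine ⟨by rw [hcrabs]; linear_combination |cr S P R| * heq, ?_⟩
    have hZS : Z = S := by rw [hZe]; simp
    rcases hcase with ⟨hlt, rfl⟩ | ⟨hlt, rfl⟩
    · left
      have hRY : R = Y := by simp [hYe]
      have hPe : P = Y + m • (X - Y) := by
        have e : P + x • (R - P) - R = (1 - x) • (P - R) := by module
        have hm : m * (1 - x) = 1 := by linear_combination heq
        rw [← hRY, hXe, e, smul_smul, hm, one_smul]
        abel
      refine ⟨hltR hlt, Or.inr ⟨?_, ?_⟩⟩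
      · rw [dist_comm Y X, hdXY, hXZ, hYZ]
        linear_combination L ^ 2 * (1 - x) * heq
      · rw [← hPe, ← hRY, hZS]
        exact tri_rotate R S P
    · right
      have hPX : P = X := by simp [hXe]
      have hRe : R = X + m • (Y - X) := by
        have e : P + y • (R - P) - P = y • (R - P) := by module
        have hm : m * y = 1 := by linear_combination heq
        rw [← hPX, hYe, e, smul_smul, hm, one_smul]
        abel
      refine ⟨hltL hlt, Or.inr ⟨?_, ?_⟩⟩
      · rw [hdXY, hXZ, hYZ]
        linear_combination L ^ 2 * y * heq
      · rw [← hRe, ← hPX, hZS, htri]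

lemma abs_cr_eq_of_distinct (V : Fin 3 → Pt) {i j k : Fin 3} (hij : i ≠ j) (hik : i ≠ k)
    (hjk : j ≠ k) : |cr (V i) (V j) (V k)| = |cr (V 0) (V 1) (V 2)| := by
  rw [abs_eq_abs]
  fin_cases i <;> fin_cases j <;> fin_cases k <;> simp at hij hik hjk <;> unfold cr <;>
    first
    | (left; rfl)
    | (left; simp only [Fin.zero_eta, Fin.mk_one, Fin.reduceFinMk]; ring1)
    | (right; simp only [Fin.zero_eta, Fin.mk_one, Fin.reduceFinMk]; ring1)

/-- `S P R` has either area more than `m` times that of the triangle `V`, or area exactly `m` times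
that area and it is one of the special containers. -/
def Good (m : ℝ) (V : Fin 3 → Pt) (S P R : Pt) : Prop :=
  m * |cr (V 0) (V 1) (V 2)| < |cr S P R| ∨
    (m * |cr (V 0) (V 1) (V 2)| = |cr S P R| ∧ ∃ i j k : Fin 3, i ≠ j ∧ i ≠ k ∧ j ≠ k ∧
      SpecAt m (V i) (V j) (V k) (tri S P R))

lemma Good.swap {m : ℝ} {V : Fin 3 → Pt} {S P R : Pt} (h : Good m V S R P) : Good m V S P R := by
  unfold Good at h ⊢
  rwa [cr_swap_right S P R, abs_neg, tri_swap_right S P R] at h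

/-- The conditions on a scalene triangle `V` and a ratio `m` used to bound its containers. -/
structure Admissible (m : ℝ) (V : Fin 3 → Pt) : Prop where
  pos : 0 < m
  lt_two : m < 2
  cr_ne_zero : cr (V 0) (V 1) (V 2) ≠ 0
  scalene : ∀ i j k : Fin 3, i ≠ j → i ≠ k → j ≠ k → dist (V i) (V j) ≠ dist (V i) (V k)
  bndAt : ∀ i j k : Fin 3, i ≠ j → i ≠ k → j ≠ k → BndAt m (V i) (V j) (V k)

lemma dist_ne_of_cr_eq_zero {S P R X Y Z : Pt} (hD : cr S P R ≠ 0) (hX : X ∈ tri S P R)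
    (hY : Y ∈ tri S P R) (hcX : cr S R X = 0) (hcY : cr S R Y = 0) (hT : cr X Y Z ≠ 0) :
    dist S X ≠ dist S Y := by
  obtain ⟨x, hx0, hx1, hXe⟩ := exists_smul_of_cr_eq_zero hD hX hcX
  obtain ⟨y, hy0, hy1, hYe⟩ := exists_smul_of_cr_eq_zero hD hY hcY
  intro h
  rw [dist_of_eq_add_smul (X := S) (x := 0) (by simp) hXe hx0,
    dist_of_eq_add_smul (X := S) (x := 0) (by simp) hYe hy0] at h
  have hSR : 0 < dist S R := by
    refine dist_pos_of_cr_ne_zero (C := P) ?_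
    rw [cr_swap_right]
    exact neg_ne_zero.mpr hD
  have hxy : x = y := by simpa using mul_right_cancel₀ hSR.ne' h
  apply hT
  rw [hXe, hYe, hxy]
  unfold cr
  ring

lemma exists_ne_and_ne (i j : Fin 3) : ∃ k, i ≠ k ∧ j ≠ k := by decide +revert

section Flush

variable {m : ℝ} {V : Fin 3 → Pt} {S P R : Pt}

lemma Admissible.good_of_leg (hV : Admissible m V) (hiso : dist S P = dist S R)
    (hD : cr S P R ≠ 0) (hmem : ∀ i, V i ∈ tri S P R) {i j : Fin 3} (hij : i ≠ j)
    (hi : cr S R (V i) = 0) (hj : cr S R (V j) = 0) : Good m V S P R := by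
  obtain ⟨k, hik, hjk⟩ : ∃ k, i ≠ k ∧ j ≠ k := exists_ne_and_ne i j
  have hcr := fun {i j k : Fin 3} => abs_cr_eq_of_distinct V (i := i) (j := j) (k := k)
  have hne : ∀ {i j k : Fin 3}, i ≠ j → i ≠ k → j ≠ k → cr (V i) (V j) (V k) ≠ 0 := by
    intro i j k hij hik hjk
    rw [← abs_pos, hcr hij hik hjk, abs_pos]
    exact hV.cr_ne_zero
  unfold Good
  rcases (dist_ne_of_cr_eq_zero hD (hmem i) (hmem j) hi hj (hne hij hik hjk)).lt_or_gt with h | h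
  · have := leg_flush hV.pos hV.lt_two hiso hD (hmem i) (hmem j) (hmem k) hi hj h (hne hij hik hjk)
      (hV.bndAt i j k hij hik hjk) (hV.bndAt i k j hik hij hjk.symm)
      (hV.scalene i k j hik hij hjk.symm)
    rw [hcr hij hik hjk] at this
    refine this.imp_right (And.imp_right ?_)
    rintro (h | h)
    exacts [⟨_, _, _, hij, hik, hjk, h⟩, ⟨_, _, _, hik, hij, hjk.symm, h⟩]
  · have := leg_flush hV.pos hV.lt_two hiso hD (hmem j) (hmem i) (hmem k) hj hi h
      (hne hij.symm hjk hik) (hV.bndAt j i k hij.symm hjk hik)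
      (hV.bndAt j k i hjk hij.symm hik.symm) (hV.scalene j k i hjk hij.symm hik.symm)
    rw [hcr hij.symm hjk hik] at this
    refine this.imp_right (And.imp_right ?_)
    rintro (h | h)
    exacts [⟨_, _, _, hij.symm, hjk, hik, h⟩, ⟨_, _, _, hjk, hij.symm, hik.symm, h⟩]

lemma Admissible.good_of_base (hV : Admissible m V) (hiso : dist S P = dist S R)
    (hD : cr S P R ≠ 0) (hmem : ∀ i, V i ∈ tri S P R) {i j : Fin 3} (hij : i ≠ j)
    (hi : cr P R (V i) = 0) (hj : cr P R (V j) = 0) : Good m V S P R := by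
  obtain ⟨k, hik, hjk⟩ : ∃ k, i ≠ k ∧ j ≠ k := exists_ne_and_ne i j
  have hcr := fun {i j k : Fin 3} => abs_cr_eq_of_distinct V (i := i) (j := j) (k := k)
  have hne : ∀ {i j k : Fin 3}, i ≠ j → i ≠ k → j ≠ k → cr (V i) (V j) (V k) ≠ 0 := by
    intro i j k hij hik hjk
    rw [← abs_pos, hcr hij hik hjk, abs_pos]
    exact hV.cr_ne_zero
  have hD' : cr P S R ≠ 0 := by
    rw [← cr_rotate, cr_swap_right]
    exact neg_ne_zero.mpr hD
  have htri : tri S P R = tri P S R := by rw [← tri_rotate, tri_swap_right]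
  unfold Good
  rcases (dist_ne_of_cr_eq_zero hD' (htri ▸ hmem i) (htri ▸ hmem j) hi hj
    (hne hij hik hjk)).lt_or_gt with h | h
  · have := base_flush hiso hD (hmem i) (hmem j) (hmem k) hi hj h (hne hij hik hjk)
      (hV.bndAt k j i hjk.symm hik.symm hij.symm) (hV.bndAt k i j hik.symm hjk.symm hij)
      (hV.scalene k i j hik.symm hjk.symm hij)
    rw [hcr hij hik hjk] at this
    refine this.imp_right (And.imp_right ?_)
    rintro (h | h)
    exacts [⟨_, _, _, hjk.symm, hik.symm, hij.symm, h⟩, ⟨_, _, _, hik.symm, hjk.symm, hij, h⟩]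
  · have := base_flush hiso hD (hmem j) (hmem i) (hmem k) hj hi h (hne hij.symm hjk hik)
      (hV.bndAt k i j hik.symm hjk.symm hij) (hV.bndAt k j i hjk.symm hik.symm hij.symm)
      (hV.scalene k j i hjk.symm hik.symm hij.symm)
    rw [hcr hij.symm hjk hik] at this
    refine this.imp_right (And.imp_right ?_)
    rintro (h | h)
    exacts [⟨_, _, _, hik.symm, hjk.symm, hij, h⟩, ⟨_, _, _, hjk.symm, hik.symm, hij.symm, h⟩]

lemma Admissible.good_of_flush (hV : Admissible m V) (hiso : dist S P = dist S R)
    (hD : cr S P R ≠ 0) (hmem : ∀ i, V i ∈ tri S P R) {i j : Fin 3} (hij : i ≠ j)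
    (h : (cr S P (V i) = 0 ∧ cr S P (V j) = 0) ∨ (cr P R (V i) = 0 ∧ cr P R (V j) = 0) ∨
      (cr R S (V i) = 0 ∧ cr R S (V j) = 0)) : Good m V S P R := by
  rcases h with ⟨hi, hj⟩ | ⟨hi, hj⟩ | ⟨hi, hj⟩
  · refine Good.swap (hV.good_of_leg hiso.symm ?_ ?_ hij hi hj)
    · rw [cr_swap_right]
      exact neg_ne_zero.mpr hD
    · intro i
      rw [tri_swap_right]
      exact hmem i
  · exact hV.good_of_base hiso hD hmem hij hi hj
  · have e : ∀ W, cr S R W = -cr R S W := fun W => by unfold cr; ring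
    exact hV.good_of_leg hiso hD hmem hij (by rw [e, hi, neg_zero]) (by rw [e, hj, neg_zero])

end Flush

/-- The support function in the directions obtained by rotating a fixed normal by `φ`, for a
triangle whose vertices have coordinates `a j`, `b j` with respect to that normal. -/
def supp (a b : Fin 3 → ℝ) (φ : ℝ) : ℝ :=
  Finset.univ.sup' Finset.univ_nonempty fun j => a j * cos φ + b j * sin φ

lemma le_supp (a b : Fin 3 → ℝ) (φ : ℝ) (j : Fin 3) : a j * cos φ + b j * sin φ ≤ supp a b φ :=
  Finset.le_sup' (fun j => a j * cos φ + b j * sin φ) (Finset.mem_univ j)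

lemma continuous_supp (a b : Fin 3 → ℝ) : Continuous (supp a b) := by
  unfold supp
  apply Continuous.finset_sup'_apply
  intro i _
  fun_prop

lemma exists_min_sum_supp (a b : Fin 3 → Fin 3 → ℝ) :
    ∃ φ, ∀ ψ, ∑ i, supp (a i) (b i) φ ≤ ∑ i, supp (a i) (b i) ψ := by
  have hc : Continuous fun φ => ∑ i, supp (a i) (b i) φ :=
    continuous_finsetSum _ fun i _ => continuous_supp _ _
  obtain ⟨φ, -, hφ⟩ := (isCompact_Icc (a := (0 : ℝ)) (b := 2 * π)).exists_isMinOn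
    (Set.nonempty_Icc.mpr (by positivity)) hc.continuousOn
  refine ⟨φ, fun ψ => ?_⟩
  have hp : Function.Periodic (fun φ => ∑ i, supp (a i) (b i) φ) (2 * π) := by
    intro φ
    simp [supp]
  obtain ⟨ψ', hψ', h⟩ := hp.exists_mem_Ico₀ (by positivity) ψ
  exact (hφ (Set.Ico_subset_Icc_self hψ')).trans h.ge

/-- At a minimum of a positive sum of support functions, one of them is attained twice. -/
lemma exists_tie_of_min (a b : Fin 3 → Fin 3 → ℝ) {φ : ℝ}
    (hpos : 0 < ∑ i, supp (a i) (b i) φ)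
    (hmin : ∀ ψ, ∑ i, supp (a i) (b i) φ ≤ ∑ i, supp (a i) (b i) ψ) :
    ∃ i j k, j ≠ k ∧ a i j * cos φ + b i j * sin φ = supp (a i) (b i) φ ∧
      a i k * cos φ + b i k * sin φ = supp (a i) (b i) φ := by
  by_contra! hcon
  have hmax : ∀ i, ∃ j, supp (a i) (b i) φ = a i j * cos φ + b i j * sin φ := by
    intro i
    obtain ⟨j, -, hj⟩ := Finset.exists_mem_eq_sup' Finset.univ_nonempty
      fun j => a i j * cos φ + b i j * sin φ
    exact ⟨j, hj⟩
  choose j hj using hmax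
  have hev : ∀ᶠ ψ in nhds φ, ∀ i, supp (a i) (b i) ψ ≤ a i (j i) * cos ψ + b i (j i) * sin ψ := by
    rw [Filter.eventually_all]
    intro i
    have h : ∀ᶠ ψ in nhds φ, ∀ l, a i l * cos ψ + b i l * sin ψ ≤
        a i (j i) * cos ψ + b i (j i) * sin ψ := by
      rw [Filter.eventually_all]
      intro l
      by_cases hl : j i = l
      · subst hl
        exact Filter.Eventually.of_forall fun _ => le_rfl
      · have hlt : a i l * cos φ + b i l * sin φ < a i (j i) * cos φ + b i (j i) * sin φ := by
          rw [← hj]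
          exact lt_of_le_of_ne (le_supp _ _ _ _) (hcon i (j i) l hl (hj i).symm)
        have hcl : Continuous fun ψ => a i l * cos ψ + b i l * sin ψ := by fun_prop
        have hcj : Continuous fun ψ => a i (j i) * cos ψ + b i (j i) * sin ψ := by fun_prop
        exact (hcl.continuousAt.eventually_lt hcj.continuousAt hlt).mono fun _ h => h.le
    filter_upwards [h] with ψ hψ
    exact Finset.sup'_le _ _ fun l _ => hψ l
  have hplus : Filter.Tendsto (fun δ : ℝ => φ + δ) (nhdsWithin 0 (Set.Ioi 0)) (nhds φ) := by
    have : Filter.Tendsto (fun δ : ℝ => φ + δ) (nhds 0) (nhds (φ + 0)) :=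
      (continuous_const.add continuous_id).tendsto 0
    rw [add_zero] at this
    exact this.mono_left nhdsWithin_le_nhds
  have hminus : Filter.Tendsto (fun δ : ℝ => φ - δ) (nhdsWithin 0 (Set.Ioi 0)) (nhds φ) := by
    have : Filter.Tendsto (fun δ : ℝ => φ - δ) (nhds 0) (nhds (φ - 0)) :=
      (continuous_const.sub continuous_id).tendsto 0
    rw [sub_zero] at this
    exact this.mono_left nhdsWithin_le_nhds
  obtain ⟨δ, h1, h2, hδ0, hδ1⟩ := ((hplus.eventually hev).and ((hminus.eventually hev).and
    (Ioo_mem_nhdsGT (zero_lt_one' ℝ)))).exists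
  have hcos : cos δ < 1 := by
    rw [← cos_zero]
    exact cos_lt_cos_of_nonneg_of_le_pi le_rfl (by linarith [pi_gt_three]) hδ0
  have hp := (hmin _).trans (Finset.sum_le_sum fun i _ => h1 i)
  have hm := (hmin _).trans (Finset.sum_le_sum fun i _ => h2 i)
  have hsum : ∑ i, (a i (j i) * cos (φ + δ) + b i (j i) * sin (φ + δ)) +
      ∑ i, (a i (j i) * cos (φ - δ) + b i (j i) * sin (φ - δ)) =
      2 * cos δ * ∑ i, supp (a i) (b i) φ := by
    rw [← Finset.sum_add_distrib, Finset.mul_sum]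
    refine Finset.sum_congr rfl fun i _ => ?_
    rw [hj, cos_add, cos_sub, sin_add, sin_sub]
    ring
  nlinarith

lemma cr_add_cr_add_cr (S P R W : Pt) : cr S P W + cr P R W + cr R S W = cr S P R := by
  unfold cr
  ring

lemma mem_tri_iff_cr_nonneg {S P R W : Pt} (hD : 0 < cr S P R) :
    W ∈ tri S P R ↔ 0 ≤ cr S P W ∧ 0 ≤ cr P R W ∧ 0 ≤ cr R S W := by
  constructor
  · intro h
    obtain ⟨a, b, c, ha, hb, hc, hs, rfl⟩ := mem_tri.mp h
    obtain rfl : a = 1 - b - c := by linarith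
    refine ⟨?_, ?_, ?_⟩
    · rw [show cr S P ((1 - b - c) • S + b • P + c • R) = c * cr S P R by simp [cr]; ring]
      positivity
    · rw [show cr P R ((1 - b - c) • S + b • P + c • R) = (1 - b - c) * cr S P R by
        simp [cr]; ring]
      positivity
    · rw [show cr R S ((1 - b - c) • S + b • P + c • R) = b * cr S P R by simp [cr]; ring]
      positivity
  · rintro ⟨h1, h2, h3⟩
    rw [mem_tri]
    refine ⟨cr P R W / cr S P R, cr R S W / cr S P R, cr S P W / cr S P R, by positivity,
      by positivity, by positivity, ?_, ?_⟩
    · rw [← cr_add_cr_add_cr S P R W] at hD ⊢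
      field_simp
      ring
    · apply pt_ext
      · simp only [PiLp.add_apply, PiLp.smul_apply, smul_eq_mul]
        field_simp
        unfold cr
        ring
      · simp only [PiLp.add_apply, PiLp.smul_apply, smul_eq_mul]
        field_simp
        unfold cr
        ring

/-- The isosceles triangle with prescribed support values in the directions normal to its sides
`(u, w)`, `(-u - u', -w - w')` and `(u', w')`. -/
lemma exists_circumscribed (V : Fin 3 → Pt) {u w u' w' D M₁ M₂ M₃ : ℝ} (hD : 0 < D)
    (hcross : u' * w - w' * u = D) (hlen : u ^ 2 + w ^ 2 = u' ^ 2 + w' ^ 2)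
    (hM : 0 < M₁ + M₂ + M₃)
    (h₁ : ∀ j, V j 0 * w - V j 1 * u ≤ M₁)
    (h₂ : ∀ j, V j 0 * (-w - w') - V j 1 * (-u - u') ≤ M₂)
    (h₃ : ∀ j, V j 0 * w' - V j 1 * u' ≤ M₃) :
    ∃ S P R : Pt, dist S P = dist S R ∧ cr S P R = (M₁ + M₂ + M₃) ^ 2 / D ∧
      (∀ j, V j ∈ tri S P R) ∧
      (∀ j, V j 0 * w - V j 1 * u = M₁ → cr S P (V j) = 0) ∧
      (∀ j, V j 0 * (-w - w') - V j 1 * (-u - u') = M₂ → cr P R (V j) = 0) ∧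
      ∀ j, V j 0 * w' - V j 1 * u' = M₃ → cr R S (V j) = 0 := by
  obtain ⟨α, hα⟩ : ∃ α, α * D = -M₃ := ⟨_, div_mul_cancel₀ _ hD.ne'⟩
  obtain ⟨β, hβ⟩ : ∃ β, β * D = M₁ := ⟨_, div_mul_cancel₀ _ hD.ne'⟩
  obtain ⟨t, ht⟩ : ∃ t, t * D = M₁ + M₂ + M₃ := ⟨_, div_mul_cancel₀ _ hD.ne'⟩
  have htpos : 0 < t := by
    rw [← ht] at hM
    exact pos_of_mul_pos_left hM hD.le
  let S : Pt := !₂[α * u + β * u', α * w + β * w']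
  let P : Pt := !₂[α * u + β * u' + t * u, α * w + β * w' + t * w]
  let R : Pt := !₂[α * u + β * u' - t * u', α * w + β * w' - t * w']
  have e₁ : ∀ W : Pt, cr S P W = t * (M₁ - (W 0 * w - W 1 * u)) := by
    intro W
    rw [← hβ]
    simp only [cr, S, P, Matrix.cons_val_zero, Matrix.cons_val_one]
    linear_combination t * β * hcross
  have e₃ : ∀ W : Pt, cr R S W = t * (M₃ - (W 0 * w' - W 1 * u')) := by
    intro W
    rw [← neg_neg M₃, ← hα]
    simp only [cr, S, R, Matrix.cons_val_zero, Matrix.cons_val_one]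
    linear_combination (-t * α) * hcross
  have hcr : cr S P R = (M₁ + M₂ + M₃) ^ 2 / D := by
    rw [← ht, eq_div_iff hD.ne']
    simp only [cr, S, P, R, Matrix.cons_val_zero, Matrix.cons_val_one]
    linear_combination t ^ 2 * D * hcross
  have e₂ : ∀ W : Pt, cr P R W = t * (M₂ - (W 0 * (-w - w') - W 1 * (-u - u'))) := by
    intro W
    have h := cr_add_cr_add_cr S P R W
    have h' : cr S P R = t * (M₁ + M₂ + M₃) := by
      rw [hcr, ← ht]
      field_simp
    rw [h', e₁, e₃] at h
    linear_combination h
  refine ⟨S, P, R, ?_, hcr, ?_, ?_, ?_, ?_⟩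
  · rw [← pow_left_inj₀ dist_nonneg dist_nonneg two_ne_zero, dist_sq_eq, dist_sq_eq]
    simp only [S, P, R, Matrix.cons_val_zero, Matrix.cons_val_one]
    linear_combination t ^ 2 * hlen
  · intro j
    rw [mem_tri_iff_cr_nonneg (by rw [hcr]; positivity), e₁, e₂, e₃]
    exact ⟨mul_nonneg htpos.le (sub_nonneg.mpr (h₁ j)),
      mul_nonneg htpos.le (sub_nonneg.mpr (h₂ j)), mul_nonneg htpos.le (sub_nonneg.mpr (h₃ j))⟩
  · intro j h
    rw [e₁, h, sub_self, mul_zero]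
  · intro j h
    rw [e₂, h, sub_self, mul_zero]
  · intro j h
    rw [e₃, h, sub_self, mul_zero]

lemma sum_pos_of_forall_le (V : Fin 3 → Pt) (hV : cr (V 0) (V 1) (V 2) ≠ 0)
    {u w u' w' M₁ M₂ M₃ : ℝ} (hcross : u' * w - w' * u ≠ 0)
    (h₁ : ∀ j, V j 0 * w - V j 1 * u ≤ M₁)
    (h₂ : ∀ j, V j 0 * (-w - w') - V j 1 * (-u - u') ≤ M₂)
    (h₃ : ∀ j, V j 0 * w' - V j 1 * u' ≤ M₃) : 0 < M₁ + M₂ + M₃ := by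
  by_contra! hM
  have hle : ∀ j k, V k 0 * w - V k 1 * u ≤ V j 0 * w - V j 1 * u := by
    intro j k
    linarith [h₁ k, h₂ j, h₃ j]
  have e₁ := (hle 0 1).antisymm (hle 1 0)
  have e₂ := (hle 0 2).antisymm (hle 2 0)
  have hw : w = 0 := by
    by_contra hw
    apply hV
    apply mul_left_cancel₀ hw
    unfold cr
    linear_combination (V 2 1 - V 0 1) * e₁ - (V 1 1 - V 0 1) * e₂
  have hu : u = 0 := by
    by_contra hu
    apply hV
    apply mul_left_cancel₀ hu
    unfold cr
    linear_combination (V 2 0 - V 0 0) * e₁ - (V 1 0 - V 0 0) * e₂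
  apply hcross
  rw [hw, hu]
  ring

lemma Admissible.good_of_legs_eq {m : ℝ} {V : Fin 3 → Pt} {S P R : Pt} (hV : Admissible m V)
    (hiso : dist S P = dist S R) (hD : 0 < cr S P R) (hmem : ∀ i, V i ∈ tri S P R) :
    Good m V S P R := by
  obtain ⟨D, hDe⟩ : ∃ D, D = cr S P R := ⟨_, rfl⟩
  have hD' : 0 < D := hDe ▸ hD
  obtain ⟨u, hu⟩ : ∃ u, u = P 0 - S 0 := ⟨_, rfl⟩
  obtain ⟨w, hw⟩ : ∃ w, w = P 1 - S 1 := ⟨_, rfl⟩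
  obtain ⟨u', hu'⟩ : ∃ u', u' = S 0 - R 0 := ⟨_, rfl⟩
  obtain ⟨w', hw'⟩ : ∃ w', w' = S 1 - R 1 := ⟨_, rfl⟩
  have hcross : u' * w - w' * u = D := by
    rw [hDe, hu, hw, hu', hw', cr]
    ring
  have hlen : u ^ 2 + w ^ 2 = u' ^ 2 + w' ^ 2 := by
    rw [hu, hw, hu', hw', ← dist_sq_eq, ← dist_sq_eq, dist_comm, hiso]
  let a : Fin 3 → Fin 3 → ℝ := ![fun j => V j 0 * w - V j 1 * u,
    fun j => V j 0 * (-w - w') - V j 1 * (-u - u'), fun j => V j 0 * w' - V j 1 * u']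
  let b : Fin 3 → Fin 3 → ℝ := ![fun j => V j 0 * u + V j 1 * w,
    fun j => V j 0 * (-u - u') + V j 1 * (-w - w'), fun j => V j 0 * u' + V j 1 * w']
  let M : Fin 3 → ℝ → ℝ := fun i φ => supp (a i) (b i) φ
  have hpres : ∀ φ, ∃ S' P' R' : Pt, 0 < M 0 φ + M 1 φ + M 2 φ ∧ dist S' P' = dist S' R' ∧
      cr S' P' R' = (M 0 φ + M 1 φ + M 2 φ) ^ 2 / D ∧ (∀ j, V j ∈ tri S' P' R') ∧
      (∀ j, a 0 j * cos φ + b 0 j * sin φ = M 0 φ → cr S' P' (V j) = 0) ∧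
      (∀ j, a 1 j * cos φ + b 1 j * sin φ = M 1 φ → cr P' R' (V j) = 0) ∧
      ∀ j, a 2 j * cos φ + b 2 j * sin φ = M 2 φ → cr R' S' (V j) = 0 := by
    intro φ
    obtain ⟨U, hU⟩ : ∃ U, U = u * cos φ - w * sin φ := ⟨_, rfl⟩
    obtain ⟨W, hW⟩ : ∃ W, W = u * sin φ + w * cos φ := ⟨_, rfl⟩
    obtain ⟨U', hU'⟩ : ∃ U', U' = u' * cos φ - w' * sin φ := ⟨_, rfl⟩
    obtain ⟨W', hW'⟩ : ∃ W', W' = u' * sin φ + w' * cos φ := ⟨_, rfl⟩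
    have hsc := sin_sq_add_cos_sq φ
    have e₀ : ∀ j, a 0 j * cos φ + b 0 j * sin φ = V j 0 * W - V j 1 * U := by
      intro j
      simp only [a, b, Matrix.cons_val_zero, hU, hW]
      ring
    have e₁ : ∀ j, a 1 j * cos φ + b 1 j * sin φ =
        V j 0 * (-W - W') - V j 1 * (-U - U') := by
      intro j
      simp only [a, b, Matrix.cons_val_one, Matrix.cons_val_zero, hU, hW, hU', hW']
      ring
    have e₂ : ∀ j, a 2 j * cos φ + b 2 j * sin φ = V j 0 * W' - V j 1 * U' := by
      intro j
      simp only [a, b, Matrix.cons_val, hU', hW']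
      ring
    have h₀ : ∀ j, V j 0 * W - V j 1 * U ≤ M 0 φ := fun j => e₀ j ▸ le_supp _ _ _ _
    have h₁ : ∀ j, V j 0 * (-W - W') - V j 1 * (-U - U') ≤ M 1 φ := fun j => e₁ j ▸ le_supp _ _ _ _
    have h₂ : ∀ j, V j 0 * W' - V j 1 * U' ≤ M 2 φ := fun j => e₂ j ▸ le_supp _ _ _ _
    have hc : U' * W - W' * U = D := by
      rw [hU, hW, hU', hW']
      linear_combination hcross + (u' * w - w' * u) * hsc
    have hl : U ^ 2 + W ^ 2 = U' ^ 2 + W' ^ 2 := by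
      rw [hU, hW, hU', hW']
      linear_combination hlen + (u ^ 2 + w ^ 2 - u' ^ 2 - w' ^ 2) * hsc
    have hpos := sum_pos_of_forall_le V hV.cr_ne_zero (hc ▸ hD'.ne') h₀ h₁ h₂
    obtain ⟨S', P', R', h⟩ := exists_circumscribed V hD' hc hl hpos h₀ h₁ h₂
    refine ⟨S', P', R', hpos, ?_⟩
    simp only [e₀, e₁, e₂]
    exact h
  obtain ⟨φ, hφ⟩ := exists_min_sum_supp a b
  have hside := fun j => (mem_tri_iff_cr_nonneg hD).mp (hmem j)
  have s₀ : ∀ j, a 0 j * cos 0 + b 0 j * sin 0 = S 0 * w - S 1 * u - cr S P (V j) := by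
    intro j
    simp only [a, b, Matrix.cons_val_zero, hu, hw, cr, cos_zero, sin_zero]
    ring
  have s₁ : ∀ j, a 1 j * cos 0 + b 1 j * sin 0 =
      P 0 * (-w - w') - P 1 * (-u - u') - cr P R (V j) := by
    intro j
    simp only [a, b, Matrix.cons_val_one, Matrix.cons_val_zero, hu, hw, hu', hw', cr, cos_zero,
      sin_zero]
    ring
  have s₂ : ∀ j, a 2 j * cos 0 + b 2 j * sin 0 = R 0 * w' - R 1 * u' - cr R S (V j) := by
    intro j
    simp only [a, b, Matrix.cons_val, hu', hw', cr, cos_zero, sin_zero]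
    ring
  have hsumD : (S 0 * w - S 1 * u) + (P 0 * (-w - w') - P 1 * (-u - u')) +
      (R 0 * w' - R 1 * u') = D := by
    rw [hDe, hu, hw, hu', hw', cr]
    ring
  have m₀ : M 0 0 ≤ S 0 * w - S 1 * u :=
    Finset.sup'_le _ _ fun j _ => by rw [s₀]; linarith [(hside j).1]
  have m₁ : M 1 0 ≤ P 0 * (-w - w') - P 1 * (-u - u') :=
    Finset.sup'_le _ _ fun j _ => by rw [s₁]; linarith [(hside j).2.1]
  have m₂ : M 2 0 ≤ R 0 * w' - R 1 * u' :=
    Finset.sup'_le _ _ fun j _ => by rw [s₂]; linarith [(hside j).2.2]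
  have hsum : ∀ ψ, ∑ i, supp (a i) (b i) ψ = M 0 ψ + M 1 ψ + M 2 ψ := fun ψ =>
    Fin.sum_univ_three _
  obtain ⟨S', P', R', hpos, hiso', hcr', hmem', f₀, f₁, f₂⟩ := hpres φ
  have hle0 : M 0 φ + M 1 φ + M 2 φ ≤ M 0 0 + M 1 0 + M 2 0 := by
    rw [← hsum, ← hsum]
    exact hφ 0
  have hcrpos : 0 < cr S' P' R' := by rw [hcr']; positivity
  have hgood : Good m V S' P' R' := by
    obtain ⟨i, j, k, hjk, hj, hk⟩ := exists_tie_of_min a b (hsum φ ▸ hpos) hφ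
    refine hV.good_of_flush hiso' hcrpos.ne' hmem' hjk ?_
    fin_cases i
    · exact Or.inl ⟨f₀ j hj, f₀ k hk⟩
    · exact Or.inr (Or.inl ⟨f₁ j hj, f₁ k hk⟩)
    · exact Or.inr (Or.inr ⟨f₂ j hj, f₂ k hk⟩)
  have hle : m * |cr (V 0) (V 1) (V 2)| ≤ cr S' P' R' := by
    rw [← abs_of_pos hcrpos]
    rcases hgood with h | h
    exacts [h.le, h.1.le]
  rcases (show M 0 φ + M 1 φ + M 2 φ ≤ D by linarith).lt_or_eq with hlt | heq
  · left
    rw [abs_of_pos hD, ← hDe]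
    refine hle.trans_lt ?_
    rw [hcr', div_lt_iff₀ hD']
    nlinarith
  · have hmin0 : ∀ ψ, ∑ i, supp (a i) (b i) 0 ≤ ∑ i, supp (a i) (b i) ψ := by
      intro ψ
      refine le_trans ?_ (hφ ψ)
      rw [hsum, hsum]
      linarith
    obtain ⟨i, j, k, hjk, hj, hk⟩ := exists_tie_of_min a b
      (lt_of_lt_of_le (hsum φ ▸ hpos) (hφ 0)) hmin0
    refine hV.good_of_flush hiso hD.ne' hmem hjk ?_
    fin_cases i
    · have hj' := (s₀ j).symm.trans hj
      have hk' := (s₀ k).symm.trans hk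
      change _ = M 0 0 at hj' hk'
      exact Or.inl ⟨by linarith, by linarith⟩
    · have hj' := (s₁ j).symm.trans hj
      have hk' := (s₁ k).symm.trans hk
      change _ = M 1 0 at hj' hk'
      exact Or.inr (Or.inl ⟨by linarith, by linarith⟩)
    · have hj' := (s₂ j).symm.trans hj
      have hk' := (s₂ k).symm.trans hk
      change _ = M 2 0 at hj' hk'
      exact Or.inr (Or.inr ⟨by linarith, by linarith⟩)

lemma Admissible.good_of_dist_eq {m : ℝ} {V : Fin 3 → Pt} {S P R : Pt} (hV : Admissible m V)
    (hiso : dist S P = dist S R) (hD : cr S P R ≠ 0) (hmem : ∀ i, V i ∈ tri S P R) :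
    Good m V S P R := by
  rcases hD.lt_or_gt with h | h
  · refine Good.swap (hV.good_of_legs_eq hiso.symm ?_ fun i => ?_)
    · rw [cr_swap_right]
      exact neg_pos.mpr h
    · rw [tri_swap_right]
      exact hmem i
  · exact hV.good_of_legs_eq hiso h hmem

lemma Admissible.good {m : ℝ} {V : Fin 3 → Pt} {S P R : Pt} (hV : Admissible m V)
    (hc : IsIsoscelesContainer (V 0) (V 1) (V 2) S P R) : Good m V S P R := by
  obtain ⟨hD, hiso, hsub⟩ := hc
  rw [affineIndependent_iff_cr_ne_zero] at hD
  have hmem : ∀ i, V i ∈ tri S P R := by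
    obtain ⟨h0, h1, h2⟩ := tri_subset_iff.mp hsub
    intro i
    fin_cases i <;> assumption
  have hrot : ∀ A B C : Pt, Good m V B C A → Good m V A B C := by
    intro A B C h
    unfold Good at h ⊢
    rwa [cr_rotate A B C, tri_rotate A B C] at h
  rcases hiso with h | h | h
  · have hg := hV.good_of_dist_eq (S := R) (P := S) (R := P) (by rw [dist_comm R P, h])
      (by rwa [← cr_rotate]) (by simpa only [← tri_rotate R S P] using hmem)
    exact hrot _ _ _ (hrot _ _ _ hg)
  · exact hV.good_of_dist_eq (by rw [← h, dist_comm]) hD hmem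
  · have hg := hV.good_of_dist_eq (S := P) (P := R) (R := S) (by rw [← h, dist_comm])
      (by rwa [cr_rotate]) (by simpa only [tri_rotate S P R] using hmem)
    exact hrot _ _ _ hg

lemma mul_sq_lt_of_lt {a b c m : ℝ} (ha : 0 < a) (hab : a < b) (hbc : b < c) (hm : 0 < m)
    (h₁ : m * b ≤ c) (h₃ : m * c ^ 2 ≤ b ^ 2 + c ^ 2 - a ^ 2) :
    m * a ^ 2 < c ^ 2 + a ^ 2 - b ^ 2 ∧ m * b ^ 2 < c ^ 2 + b ^ 2 - a ^ 2 := by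
  constructor
  · have hb : 0 < b := ha.trans hab
    have h : 0 < (c - b) * (b * (c + b) - a ^ 2) := mul_pos (by linarith) (by nlinarith)
    have h' := mul_le_mul_of_nonneg_right h₁ (sq_nonneg a)
    refine lt_of_mul_lt_mul_left ?_ hb.le
    linarith
  · have h : b ^ 2 < c ^ 2 := by nlinarith
    have h' := mul_lt_mul_of_pos_left h hm
    linarith

lemma Admissible.of_dist_lt {A B C : Pt} {m : ℝ} (hT : cr A B C ≠ 0) (hab : dist B C < dist C A)
    (hbc : dist C A < dist A B) (hm : 0 < m) (h₁ : m * dist C A ≤ dist A B)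
    (h₂ : m * dist B C ≤ dist C A)
    (h₃ : m * dist A B ^ 2 ≤ dist C A ^ 2 + dist A B ^ 2 - dist B C ^ 2) :
    Admissible m ![A, B, C] := by
  have ha : 0 < dist B C := dist_pos_of_cr_ne_zero (C := A) (by rwa [cr_rotate])
  have e₁ := dist_comm A C
  have e₂ := dist_comm B A
  have e₃ := dist_comm C B
  have x₁ : m * dist B C ^ 2 ≤ dist A B ^ 2 + dist B C ^ 2 - dist C A ^ 2 :=
    (mul_sq_lt_of_lt ha hab hbc hm h₁ h₃).1.le
  have x₂ : m * dist C A ^ 2 ≤ dist A B ^ 2 + dist C A ^ 2 - dist B C ^ 2 :=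
    (mul_sq_lt_of_lt ha hab hbc hm h₁ h₃).2.le
  refine ⟨hm, ?_, hT, ?_, ?_⟩
  · nlinarith
  · intro i j k hij hik hjk
    fin_cases i <;> fin_cases j <;> fin_cases k <;> simp at hij hik hjk <;>
      simp only [Fin.zero_eta, Fin.mk_one, Fin.reduceFinMk, Matrix.cons_val, e₁, e₂, e₃] <;>
      intro h <;> linarith
  · intro i j k hij hik hjk
    fin_cases i <;> fin_cases j <;> fin_cases k <;> simp at hij hik hjk <;>
      simp only [Fin.zero_eta, Fin.mk_one, Fin.reduceFinMk, Matrix.cons_val, BndAt, e₁, e₂, e₃] <;>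
      intro h <;> constructor <;> linarith

lemma specAt_cases {A B C : Pt} {m : ℝ} {D : Set Pt} (hT : cr A B C ≠ 0)
    (hab : dist B C < dist C A) (hbc : dist C A < dist A B) (hm : 0 < m)
    (h₁ : m * dist C A ≤ dist A B) (h₂ : m * dist B C ≤ dist C A)
    (h₃ : m * dist A B ^ 2 ≤ dist C A ^ 2 + dist A B ^ 2 - dist B C ^ 2)
    {i j k : Fin 3} (hij : i ≠ j) (hik : i ≠ k) (hjk : j ≠ k)
    (h : SpecAt m (![A, B, C] i) (![A, B, C] j) (![A, B, C] k) D) :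
    (m * dist C A = dist A B ∧ D = tri A B (A + m • (C - A))) ∨
      (m * dist B C = dist C A ∧ D = tri C A (C + m • (B - C))) ∨
      (m * dist A B ^ 2 = dist C A ^ 2 + dist A B ^ 2 - dist B C ^ 2 ∧
        D = tri A C (A + m • (B - A))) := by
  have ha : 0 < dist B C := dist_pos_of_cr_ne_zero (C := A) (by rwa [cr_rotate])
  have e₁ := dist_comm A C
  have e₂ := dist_comm B A
  have e₃ := dist_comm C B
  obtain ⟨x₁, x₂⟩ := mul_sq_lt_of_lt ha hab hbc hm h₁ h₃
  obtain ⟨hlt, h⟩ := h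
  fin_cases i <;> fin_cases j <;> fin_cases k <;> simp at hij hik hjk <;>
    simp only [Fin.zero_eta, Fin.mk_one, Fin.reduceFinMk, Matrix.cons_val, e₁, e₂, e₃] at hlt h
  · rcases h with h | h
    · exact Or.inl h
    · exact absurd h.1 x₁.ne
  · linarith
  · rcases h with h | h
    · linarith [h.1]
    · exact absurd h.1 x₂.ne
  · linarith
  · rcases h with h | h
    · exact Or.inr (Or.inl h)
    · exact Or.inr (Or.inr h)
  · linarith

lemma tri_subset_extend {A B C : Pt} {m : ℝ} (hm : 1 ≤ m) :
    tri A B C ⊆ tri A B (A + m • (C - A)) := by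
  rw [tri_subset_iff]
  refine ⟨subset_convexHull ℝ _ (by simp), subset_convexHull ℝ _ (by simp), ?_⟩
  rw [mem_tri]
  have hm0 : 0 < m := by linarith
  refine ⟨1 - m⁻¹, 0, m⁻¹, sub_nonneg.mpr (inv_le_one_of_one_le₀ hm), le_rfl, by positivity,
    by ring, ?_⟩
  rw [smul_add, smul_smul, inv_mul_cancel₀ hm0.ne']
  module

lemma cr_extend (A B C : Pt) (m : ℝ) : cr A B (A + m • (C - A)) = m * cr A B C := by
  simp [cr]
  ring

lemma one_lt_of_mul_eq {x y m : ℝ} (hx : 0 < x) (hxy : x < y) (h : m * x = y) : 1 < m := by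
  by_contra! hm
  nlinarith

section Candidates

variable {A B C : Pt} {m : ℝ}

lemma isIsoscelesContainer_of_mul_eq (hT : cr A B C ≠ 0) (h0 : 0 < dist C A)
    (hbc : dist C A < dist A B) (h : m * dist C A = dist A B) :
    IsIsoscelesContainer A B C A B (A + m • (C - A)) := by
  have hm := one_lt_of_mul_eq h0 hbc h
  refine ⟨?_, ?_, tri_subset_extend hm.le⟩
  · rw [affineIndependent_iff_cr_ne_zero, cr_extend]
    exact mul_ne_zero (by linarith) hT
  · right; left
    rw [dist_comm, dist_add_smul_sub (by linarith), dist_comm A C, h]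

lemma isIsoscelesContainer_base (hT : cr A B C ≠ 0)
    (hab : dist B C < dist C A) (h0 : 0 < dist A B)
    (h : m * dist A B ^ 2 = dist C A ^ 2 + dist A B ^ 2 - dist B C ^ 2) :
    IsIsoscelesContainer A B C A C (A + m • (B - A)) := by
  have hm := one_lt_of_mul_eq (x := dist A B ^ 2)
    (y := dist C A ^ 2 + dist A B ^ 2 - dist B C ^ 2) (by positivity)
    (by nlinarith [dist_nonneg (x := B) (y := C)]) h
  refine ⟨?_, ?_, ?_⟩
  · rw [affineIndependent_iff_cr_ne_zero, cr_extend, cr_swap_right]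
    exact mul_ne_zero (by linarith) (neg_ne_zero.mpr hT)
  · right; right
    rw [← pow_left_inj₀ dist_nonneg dist_nonneg two_ne_zero, dist_sq_eq, dist_sq_eq]
    simp only [dist_sq_eq] at h
    simp only [PiLp.add_apply, PiLp.smul_apply, PiLp.sub_apply, smul_eq_mul]
    linear_combination -m * h
  · rw [← tri_swap_right]
    exact tri_subset_extend hm.le

lemma IsIsoscelesContainer.rotate {S P R : Pt} (h : IsIsoscelesContainer B C A S P R) :
    IsIsoscelesContainer A B C S P R := by
  obtain ⟨h1, h2, h3⟩ := h
  exact ⟨h1, h2, by rwa [tri_rotate] at h3⟩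

end Candidates

section ThreeMinima

variable {A B C : Pt} {m : ℝ}

lemma tri_extend_ne_tri_rotate_extend (hT : cr A B C ≠ 0) (hm : 1 < m) :
    tri A B (A + m • (C - A)) ≠ tri C A (C + m • (B - C)) := by
  intro h
  have hmem : A + m • (C - A) ∈ tri A B (A + m • (C - A)) := subset_convexHull ℝ _ (by simp)
  rw [h, mem_tri] at hmem
  obtain ⟨p, q, r, hp, hq, hr, hs, he⟩ := hmem
  obtain rfl : p = 1 - q - r := by linarith
  have h0 := congrArg (fun W => cr A C W) he
  have h1 := congrArg (fun W => cr B C W) he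
  simp only [cr, PiLp.add_apply, PiLp.smul_apply, PiLp.sub_apply, smul_eq_mul] at h0 h1
  have hr0 : r * m = 0 := by
    apply mul_right_cancel₀ hT
    unfold cr
    linear_combination h0
  have hrr : r = 0 := by
    rcases mul_eq_zero.mp hr0 with h | h
    · exact h
    · linarith
  subst hrr
  have hq1 : q = 1 - m := by
    apply mul_right_cancel₀ hT
    unfold cr
    linear_combination -h1
  linarith

lemma tri_extend_ne_tri_base (hT : cr A B C ≠ 0) (hm : 1 < m) :
    tri A B (A + m • (C - A)) ≠ tri A C (A + m • (B - A)) := by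
  intro h
  have hmem : A + m • (C - A) ∈ tri A B (A + m • (C - A)) := subset_convexHull ℝ _ (by simp)
  rw [h, mem_tri] at hmem
  obtain ⟨p, q, r, hp, hq, hr, hs, he⟩ := hmem
  obtain rfl : p = 1 - q - r := by linarith
  have h1 := congrArg (fun W => cr A B W) he
  simp only [cr, PiLp.add_apply, PiLp.smul_apply, PiLp.sub_apply, smul_eq_mul] at h1
  have hq1 : q = m := by
    apply mul_right_cancel₀ hT
    unfold cr
    linear_combination -h1
  linarith

lemma tri_rotate_extend_ne_tri_base (hT : cr A B C ≠ 0) (hm : 1 < m) :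
    tri C A (C + m • (B - C)) ≠ tri A C (A + m • (B - A)) := by
  intro h
  have hmem : C + m • (B - C) ∈ tri C A (C + m • (B - C)) := subset_convexHull ℝ _ (by simp)
  rw [h, mem_tri] at hmem
  obtain ⟨p, q, r, hp, hq, hr, hs, he⟩ := hmem
  obtain rfl : p = 1 - q - r := by linarith
  have h1 := congrArg (fun W => cr A B W) he
  simp only [cr, PiLp.add_apply, PiLp.smul_apply, PiLp.sub_apply, smul_eq_mul] at h1
  have hq1 : q = 1 - m := by
    apply mul_right_cancel₀ hT
    unfold cr
    linear_combination -h1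
  linarith

lemma exists_container_of_min (hT : cr A B C ≠ 0) (hab : dist B C < dist C A)
    (hbc : dist C A < dist A B) :
    ∃ m, 0 < m ∧ m * dist C A ≤ dist A B ∧ m * dist B C ≤ dist C A ∧
      m * dist A B ^ 2 ≤ dist C A ^ 2 + dist A B ^ 2 - dist B C ^ 2 ∧
      ∃ S P R, IsIsoscelesContainer A B C S P R ∧ |cr S P R| = m * |cr A B C| := by
  have ha : 0 < dist B C := dist_pos_of_cr_ne_zero (C := A) (by rwa [cr_rotate])
  have hb := ha.trans hab
  have hc := hb.trans hbc
  have hr3 : 0 < dist C A ^ 2 + dist A B ^ 2 - dist B C ^ 2 := by nlinarith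
  have hcr : ∀ m > 0, ∀ A B C : Pt, |cr A B (A + m • (C - A))| = m * |cr A B C| := by
    intro m hm A B C
    rw [cr_extend, abs_mul, abs_of_pos hm]
  obtain ⟨m, hm⟩ : ∃ m, m = min (dist A B / dist C A) (min (dist C A / dist B C)
    ((dist C A ^ 2 + dist A B ^ 2 - dist B C ^ 2) / dist A B ^ 2)) := ⟨_, rfl⟩
  have hm0 : 0 < m := by
    rw [hm]
    positivity
  have hm₁ : m ≤ dist A B / dist C A := hm ▸ min_le_left _ _
  have hm₂ : m ≤ dist C A / dist B C := hm ▸ (min_le_right _ _).trans (min_le_left _ _)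
  have hm₃ : m ≤ (dist C A ^ 2 + dist A B ^ 2 - dist B C ^ 2) / dist A B ^ 2 :=
    hm ▸ (min_le_right _ _).trans (min_le_right _ _)
  refine ⟨m, hm0, (le_div_iff₀ hb).mp hm₁, (le_div_iff₀ ha).mp hm₂,
    (le_div_iff₀ (by positivity)).mp hm₃, ?_⟩
  rcases min_choice (dist A B / dist C A) (min (dist C A / dist B C)
    ((dist C A ^ 2 + dist A B ^ 2 - dist B C ^ 2) / dist A B ^ 2)) with h | h
  · rw [← hm, eq_div_iff hb.ne'] at h
    exact ⟨_, _, _, isIsoscelesContainer_of_mul_eq hT hb hbc h, hcr m hm0 A B C⟩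
  · rw [← hm] at h
    rcases min_choice (dist C A / dist B C)
      ((dist C A ^ 2 + dist A B ^ 2 - dist B C ^ 2) / dist A B ^ 2) with h' | h' <;>
      rw [h'] at h
    · rw [eq_div_iff ha.ne'] at h
      refine ⟨_, _, _, (isIsoscelesContainer_of_mul_eq ?_ ha hab h).rotate.rotate, ?_⟩
      · rwa [← cr_rotate]
      · rw [hcr m hm0, ← cr_rotate]
    · rw [eq_div_iff (by positivity)] at h
      refine ⟨_, _, _, isIsoscelesContainer_base hT hab hc h, ?_⟩
      rw [hcr m hm0, cr_swap_right, abs_neg]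

lemma three_minima_iff (hT : cr A B C ≠ 0) (hab : dist B C < dist C A)
    (hbc : dist C A < dist A B) :
    (∃ S₁ P₁ R₁ S₂ P₂ R₂ S₃ P₃ R₃ : Pt,
      IsMinIsoscelesContainer A B C S₁ P₁ R₁ ∧ IsMinIsoscelesContainer A B C S₂ P₂ R₂ ∧
      IsMinIsoscelesContainer A B C S₃ P₃ R₃ ∧ tri S₁ P₁ R₁ ≠ tri S₂ P₂ R₂ ∧
      tri S₁ P₁ R₁ ≠ tri S₃ P₃ R₃ ∧ tri S₂ P₂ R₂ ≠ tri S₃ P₃ R₃) ↔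
    ∃ m, m * dist C A = dist A B ∧ m * dist B C = dist C A ∧
      m * dist A B ^ 2 = dist C A ^ 2 + dist A B ^ 2 - dist B C ^ 2 := by
  have ha : 0 < dist B C := dist_pos_of_cr_ne_zero (C := A) (by rwa [cr_rotate])
  have hb := ha.trans hab
  have hc := hb.trans hbc
  obtain ⟨κ, hκ, hκe⟩ := exists_triArea_eq
  constructor
  · rintro ⟨S₁, P₁, R₁, S₂, P₂, R₂, S₃, P₃, R₃, m₁, m₂, m₃, h₁₂, h₁₃, h₂₃⟩
    obtain ⟨m, hm, hm₁, hm₂, hm₃, S, P, R, hSPR, hcr⟩ := exists_container_of_min hT hab hbc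
    have hadm := Admissible.of_dist_lt hT hab hbc hm hm₁ hm₂ hm₃
    have key : ∀ {S' P' R' : Pt}, IsMinIsoscelesContainer A B C S' P' R' →
        (m * dist C A = dist A B ∧ tri S' P' R' = tri A B (A + m • (C - A))) ∨
        (m * dist B C = dist C A ∧ tri S' P' R' = tri C A (C + m • (B - C))) ∨
        (m * dist A B ^ 2 = dist C A ^ 2 + dist A B ^ 2 - dist B C ^ 2 ∧
          tri S' P' R' = tri A C (A + m • (B - A))) := by
      intro S' P' R' h
      have hle := h.2 S P R hSPR
      rw [hκe, hκe, hcr] at hle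
      have hle' := le_of_mul_le_mul_left hle hκ
      rcases hadm.good h.1 with hg | ⟨-, i, j, k, hij, hik, hjk, hs⟩
      · exact absurd hg hle'.not_gt
      · exact specAt_cases hT hab hbc hm hm₁ hm₂ hm₃ hij hik hjk hs
    refine ⟨m, ?_⟩
    rcases key m₁ with ⟨a₁, e₁⟩ | ⟨a₁, e₁⟩ | ⟨a₁, e₁⟩ <;>
      rcases key m₂ with ⟨a₂, e₂⟩ | ⟨a₂, e₂⟩ | ⟨a₂, e₂⟩ <;>
      first
      | exact absurd (e₁.trans e₂.symm) h₁₂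
      | (rcases key m₃ with ⟨a₃, e₃⟩ | ⟨a₃, e₃⟩ | ⟨a₃, e₃⟩ <;>
          first
          | exact absurd (e₁.trans e₃.symm) h₁₃
          | exact absurd (e₂.trans e₃.symm) h₂₃
          | exact ⟨by assumption, by assumption, by assumption⟩)
  · rintro ⟨m, h₁, h₂, h₃⟩
    have hm := one_lt_of_mul_eq hb hbc h₁
    have hm0 : 0 < m := by linarith
    have hadm := Admissible.of_dist_lt hT hab hbc hm0 h₁.le h₂.le h₃.le
    have hmin : ∀ {S P R : Pt}, IsIsoscelesContainer A B C S P R →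
        |cr S P R| = m * |cr A B C| → IsMinIsoscelesContainer A B C S P R := by
      intro S P R h he
      refine ⟨h, fun S' P' R' h' => ?_⟩
      rw [hκe, hκe, he]
      refine mul_le_mul_of_nonneg_left ?_ hκ.le
      rcases hadm.good (V := ![A, B, C]) h' with hg | hg
      exacts [hg.le, hg.1.le]
    refine ⟨A, B, A + m • (C - A), C, A, C + m • (B - C), A, C, A + m • (B - A),
      hmin (isIsoscelesContainer_of_mul_eq hT hb hbc h₁) ?_,
      hmin (isIsoscelesContainer_of_mul_eq ?_ ha hab h₂).rotate.rotate ?_,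
      hmin (isIsoscelesContainer_base hT hab hc h₃) ?_, tri_extend_ne_tri_rotate_extend hT hm,
      tri_extend_ne_tri_base hT hm, tri_rotate_extend_ne_tri_base hT hm⟩
    · rw [cr_extend, abs_mul, abs_of_pos hm0]
    · rwa [← cr_rotate]
    · rw [cr_extend, abs_mul, abs_of_pos hm0, ← cr_rotate]
    · rw [cr_extend, abs_mul, abs_of_pos hm0, cr_swap_right, abs_neg]

end ThreeMinima

lemma sin_three_mul_eq_sin_pi_sub (x : ℝ) : Real.sin (3 * x) = Real.sin (π - 3 * x) :=
  (Real.sin_pi_sub _).symm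

lemma sin_three_mul_pos {x : ℝ} (hx : x ∈ Set.Icc (π / 5) (π / 4)) : 0 < Real.sin (3 * x) :=
  Real.sin_pos_of_pos_of_lt_pi (by linarith [hx.1, pi_pos]) (by linarith [hx.2, pi_pos])

lemma strictMonoOn_sin_mul_sin_two_mul_sub :
    StrictMonoOn (fun x : ℝ => Real.sin x * Real.sin (2 * x) - Real.sin (3 * x) ^ 2)
      (Set.Icc (π / 5) (π / 4)) := by
  intro x hx y hy hxy
  have hπ := pi_pos
  have h₁ : Real.sin x < Real.sin y :=
    Real.sin_lt_sin_of_lt_of_le_pi_div_two (by linarith [hx.1]) (by linarith [hy.2]) hxy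
  have h₂ : Real.sin (2 * x) < Real.sin (2 * y) :=
    Real.sin_lt_sin_of_lt_of_le_pi_div_two (by linarith [hx.1]) (by linarith [hy.2])
      (by linarith)
  have h₃ : Real.sin (3 * y) < Real.sin (3 * x) := by
    rw [sin_three_mul_eq_sin_pi_sub x, sin_three_mul_eq_sin_pi_sub y]
    exact Real.sin_lt_sin_of_lt_of_le_pi_div_two (by linarith [hy.2]) (by linarith [hx.1])
      (by linarith)
  have h₄ := sin_three_mul_pos hy
  have h₅ : 0 < Real.sin x :=
    Real.sin_pos_of_pos_of_lt_pi (by linarith [hx.1]) (by linarith [hx.2])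
  have h₆ : 0 < Real.sin (2 * x) :=
    Real.sin_pos_of_pos_of_lt_pi (by linarith [hx.1]) (by linarith [hx.2])
  have h₇ := mul_lt_mul'' h₁ h₂ h₅.le h₆.le
  have h₈ := pow_lt_pow_left₀ h₃ h₄.le two_ne_zero
  simp only
  linarith

lemma exists_sin_mul_sin_two_mul_eq :
    ∃ x ∈ Set.Icc (π / 5) (π / 4), Real.sin x * Real.sin (2 * x) = Real.sin (3 * x) ^ 2 := by
  have hπ := pi_pos
  have hcont : ContinuousOn
      (fun x : ℝ => Real.sin x * Real.sin (2 * x) - Real.sin (3 * x) ^ 2)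
      (Set.Icc (π / 5) (π / 4)) := by fun_prop
  have hle : π / 5 ≤ π / 4 := by linarith
  suffices hmem : (0 : ℝ) ∈ Set.Icc _ _ by
    obtain ⟨x, hx, h⟩ := intermediate_value_Icc hle hcont hmem
    exact ⟨x, hx, sub_eq_zero.mp h⟩
  constructor
  · have h₁ : Real.sin (3 * (π / 5)) = Real.sin (2 * (π / 5)) := by
      rw [← Real.sin_pi_sub]; congr 1; ring
    have h₂ : Real.sin (π / 5) < Real.sin (2 * (π / 5)) :=
      Real.sin_lt_sin_of_lt_of_le_pi_div_two (by linarith) (by linarith) (by linarith)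
    have h₃ : 0 < Real.sin (π / 5) := Real.sin_pos_of_pos_of_lt_pi (by linarith) (by linarith)
    simp only [h₁]
    nlinarith
  · have h₁ : Real.sin (3 * (π / 4)) = Real.sin (π / 4) := by
      rw [← Real.sin_pi_sub]; congr 1; ring
    have h₂ : Real.sin (2 * (π / 4)) = 1 := by
      rw [← Real.sin_pi_div_two]; congr 1; ring
    have h₃ : 0 < Real.sin (π / 4) := Real.sin_pos_of_pos_of_lt_pi (by linarith) (by linarith)
    simp only [h₁, h₂]
    nlinarith [Real.sin_le_one (π / 4)]

section Angles

variable {A B C : Pt}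

lemma dist_relations_iff_angles (h : ¬ Collinear ℝ {A, B, C}) (hab : dist B C < dist C A)
    (hbc : dist C A < dist A B) :
    (dist B C * dist A B = dist C A ^ 2 ∧ dist A B = 2 * dist B C * cos (∠ B A C)) ↔
      ∠ B A C ∈ Set.Icc (π / 5) (π / 4) ∧
        sin (∠ B A C) * sin (2 * ∠ B A C) = sin (3 * ∠ B A C) ^ 2 ∧
        ∠ A B C = π - 3 * ∠ B A C ∧ ∠ A C B = 2 * ∠ B A C := by
  have hBAC : ¬ Collinear ℝ {B, A, C} := by rwa [Set.insert_comm]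
  have hACB : ¬ Collinear ℝ {A, C, B} := by rwa [Set.pair_comm C B]
  have hCBA : ¬ Collinear ℝ {C, B, A} := by rwa [Set.insert_comm, Set.pair_comm, Set.insert_comm]
  have hα0 := angle_pos_of_not_collinear hBAC
  have hβ0 := angle_pos_of_not_collinear h
  have hγ0 := angle_pos_of_not_collinear hACB
  have hsα := sin_pos_of_not_collinear hBAC
  have hne : B ≠ A := by
    rintro rfl
    rw [dist_self] at hbc
    exact hbc.not_ge dist_nonneg
  have hsum : ∠ A B C + ∠ A C B + ∠ B A C = π := by
    have := angle_add_angle_add_angle_eq_pi C hne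
    rwa [angle_comm B C A, angle_comm C A B] at this
  have hαβ : ∠ B A C < ∠ A B C := by
    have := (angle_lt_iff_dist_lt hCBA).mpr (by rwa [dist_comm C B])
    rwa [angle_comm C A B, angle_comm C B A] at this
  have hβγ : ∠ A B C < ∠ A C B := (angle_lt_iff_dist_lt hACB).mpr (by rwa [dist_comm A C])
  have ha : 0 < dist B C := dist_pos.mpr (by
    rintro rfl
    simp [collinear_pair] at h)
  have hβs : sin (∠ B A C) * dist C A = sin (∠ A B C) * dist B C := by
    have := law_sin B A C
    rwa [angle_comm C B A, dist_comm C B, dist_comm A C] at this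
  have hγs : sin (∠ A C B) * dist B C = sin (∠ B A C) * dist A B := by
    have := law_sin A C B
    rwa [dist_comm C B, dist_comm B A] at this
  generalize ∠ B A C = α at *
  generalize ∠ A B C = β at *
  generalize ∠ A C B = γ at *
  generalize dist B C = a at *
  generalize dist C A = b at *
  generalize dist A B = c at *
  have hgeom : a * c = b ^ 2 ↔ sin α * sin γ = sin β ^ 2 := by
    have h₁ : sin α ^ 2 * (a * c - b ^ 2) = a ^ 2 * (sin α * sin γ - sin β ^ 2) := by
      linear_combination (-sin α * a) * hγs - (sin α * b + sin β * a) * hβs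
    rw [← sub_eq_zero, ← sub_eq_zero (b := sin β ^ 2)]
    constructor <;> intro h₂ <;> rw [h₂, mul_zero] at h₁
    · exact (mul_eq_zero.mp h₁.symm).resolve_left (by positivity)
    · exact (mul_eq_zero.mp h₁).resolve_left (by positivity)
  have hcos : c = 2 * a * cos α ↔ sin γ = sin (2 * α) := by
    rw [sin_two_mul]
    constructor <;> intro h₂
    · apply mul_right_cancel₀ ha.ne'
      linear_combination hγs + sin α * h₂
    · apply mul_left_cancel₀ hsα.ne'
      linear_combination -hγs + a * h₂
  rw [hgeom, hcos]
  constructor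
  · rintro ⟨h₁, h₂⟩
    have h₃ : γ = 2 * α := by
      have h₄ := sin_sub_sin γ (2 * α)
      rw [h₂, sub_self, eq_comm, mul_assoc, mul_eq_zero_iff_left two_ne_zero, mul_eq_zero] at h₄
      rcases h₄ with h₄ | h₄
      · rw [sin_eq_zero_iff_of_lt_of_lt (by linarith) (by linarith)] at h₄
        linarith
      · rw [← sin_pi_div_two_sub, sin_eq_zero_iff_of_lt_of_lt (by linarith) (by linarith)] at h₄
        linarith
    have h₄ : β = π - 3 * α := by linarith
    refine ⟨⟨by linarith, by linarith⟩, ?_, h₄, h₃⟩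
    rw [← h₃, h₁, h₄, sin_pi_sub]
  · rintro ⟨-, h₁, rfl, rfl⟩
    rw [sin_pi_sub]
    exact ⟨h₁, rfl⟩

lemma exists_ratio_iff_dist_relations (ha : 0 < dist B C) (hb : 0 < dist C A)
    (hc : 0 < dist A B) :
    (∃ m, m * dist C A = dist A B ∧ m * dist B C = dist C A ∧
      m * dist A B ^ 2 = dist C A ^ 2 + dist A B ^ 2 - dist B C ^ 2) ↔
    dist B C * dist A B = dist C A ^ 2 ∧ dist A B = 2 * dist B C * cos (∠ B A C) := by
  have h := law_cos B A C
  rw [dist_comm B A] at h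
  generalize dist B C = a at *
  generalize dist C A = b at *
  generalize dist A B = c at *
  constructor
  · rintro ⟨m, h₁, h₂, h₃⟩
    refine ⟨by linear_combination (-a) * h₁ + b * h₂, ?_⟩
    have : b * c * (c - 2 * a * cos (∠ B A C)) = 0 := by
      linear_combination a * h₃ - c ^ 2 * h₂ - a * h
    have := (mul_eq_zero.mp this).resolve_left (by positivity)
    linarith
  · rintro ⟨h₁, h₂⟩
    refine ⟨b / a, ?_, div_mul_cancel₀ _ ha.ne', ?_⟩
    · rw [div_mul_eq_mul_div, div_eq_iff ha.ne']
      linear_combination -h₁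
    · rw [div_mul_eq_mul_div, div_eq_iff ha.ne']
      linear_combination a * h + b * c * h₂

end Angles

/-- there is a unique `α*` in `[π/5, π/4]` with
`sin α* · sin 2α* = sin² 3α*`, and a triangle with side lengths `a < b < c`
has three pairwise distinct minimum area isosceles containers if and only if
its angles are `α*`, `π - 3α*` and `2α*` (necessarily in this order at the
vertices `A`, `B`, `C`, since `a < b < c`). -/
theorem statement5 :
    ∃ αs : ℝ, αs ∈ Set.Icc (π / 5) (π / 4) ∧
      sin αs * sin (2 * αs) = sin (3 * αs) ^ 2 ∧
      (∀ β ∈ Set.Icc (π / 5) (π / 4),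
        sin β * sin (2 * β) = sin (3 * β) ^ 2 → β = αs) ∧
      ∀ A B C : Pt, AffineIndependent ℝ ![A, B, C] →
        dist B C < dist C A → dist C A < dist A B →
        ((∃ S₁ P₁ R₁ S₂ P₂ R₂ S₃ P₃ R₃ : Pt,
            IsMinIsoscelesContainer A B C S₁ P₁ R₁ ∧
            IsMinIsoscelesContainer A B C S₂ P₂ R₂ ∧
            IsMinIsoscelesContainer A B C S₃ P₃ R₃ ∧
            tri S₁ P₁ R₁ ≠ tri S₂ P₂ R₂ ∧
            tri S₁ P₁ R₁ ≠ tri S₃ P₃ R₃ ∧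
            tri S₂ P₂ R₂ ≠ tri S₃ P₃ R₃) ↔
          (∠ B A C = αs ∧ ∠ A B C = π - 3 * αs ∧ ∠ A C B = 2 * αs)) := by
  obtain ⟨αs, hαs, hαs'⟩ := exists_sin_mul_sin_two_mul_eq
  have huniq : ∀ β ∈ Set.Icc (π / 5) (π / 4),
      sin β * sin (2 * β) = sin (3 * β) ^ 2 → β = αs := fun β hβ hβ' =>
    strictMonoOn_sin_mul_sin_two_mul_sub.injOn hβ hαs
      ((sub_eq_zero.mpr hβ').trans (sub_eq_zero.mpr hαs').symm)
  refine ⟨αs, hαs, hαs', huniq, fun A B C hABC hab hbc => ?_⟩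
  have hT := affineIndependent_iff_cr_ne_zero.mp hABC
  have ha : 0 < dist B C := dist_pos_of_cr_ne_zero (C := A) (by rwa [cr_rotate])
  rw [three_minima_iff hT hab hbc,
    exists_ratio_iff_dist_relations ha (ha.trans hab) (ha.trans (hab.trans hbc)),
    dist_relations_iff_angles (affineIndependent_iff_not_collinear_set.mp hABC) hab hbc]
  constructor
  · rintro ⟨h₁, h₂, h₃, h₄⟩
    rw [← huniq _ h₁ h₂]
    exact ⟨rfl, h₃, h₄⟩
  · rintro ⟨rfl, h₂, h₃⟩
    exact ⟨hαs, hαs', h₂, h₃⟩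
end
end

section
/- The constant √2 is best possible in the following sense: for every ε > 0 there exists a triangle ABC such that every isosceles container of ABC has area strictly greater than (√2 − ε) · t(ABC). -/
open EuclideanGeometry MeasureTheory Real

noncomputable section

/-- Twice the signed area of the triangle with vertices `A`, `B`, `C`. -/
def crossDet (A B C : Pt) : ℝ :=
  (B 0 - A 0) * (C 1 - A 1) - (C 0 - A 0) * (B 1 - A 1)

lemma mem_tri_iff {A B C X : Pt} :
    X ∈ tri A B C ↔ ∃ a b c : ℝ, 0 ≤ a ∧ 0 ≤ b ∧ 0 ≤ c ∧ a + b + c = 1 ∧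
      a • A + b • B + c • C = X := by
  constructor
  · intro h
    rw [tri, convexHull_insert (by simp), convexHull_pair] at h
    simp only [convexJoin_singleton_left, Set.mem_iUnion] at h
    obtain ⟨Y, ⟨p, q, hp, hq, hpq, rfl⟩, ⟨m, n, hm, hn, hmn, rfl⟩⟩ := h
    refine ⟨m, n * p, n * q, hm, by positivity, by positivity, ?_, ?_⟩
    · rw [add_assoc, ← mul_add, hpq, mul_one, hmn]
    · module
  · rintro ⟨a, b, c, ha, hb, hc, habc, rfl⟩
    have hconv : Convex ℝ (tri A B C) := convex_convexHull ℝ _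
    have hsub : {A, B, C} ⊆ tri A B C := subset_convexHull ℝ _
    have h := hconv.sum_mem (t := Finset.univ) (w := ![a, b, c]) (z := ![A, B, C])
      (by simp [Fin.forall_fin_succ, ha, hb, hc])
      (by simp [Fin.sum_univ_succ, ← habc, add_assoc])
      (by
        intro i _
        fin_cases i <;> apply hsub <;> simp)
    simpa [Fin.sum_univ_succ, add_assoc] using h

lemma affineIndependent_of_crossDet_ne_zero {A B C : Pt} (h : crossDet A B C ≠ 0) :
    AffineIndependent ℝ ![A, B, C] := by
  rw [affineIndependent_iff_linearIndependent_vsub ℝ _ (0 : Fin 3),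
    ← linearIndependent_equiv (finSuccAboveEquiv (0 : Fin 3))]
  have hfun : (fun i : {i : Fin 3 // i ≠ 0} => (![A, B, C] i -ᵥ ![A, B, C] 0 : Pt)) ∘
      finSuccAboveEquiv (0 : Fin 3) = ![B - A, C - A] := by
    funext i
    fin_cases i
    · exact congrArg (B - ·) rfl
    · exact congrArg (C - ·) rfl
  rw [hfun, LinearIndependent.pair_iff]
  intro p q hpq
  have h0 := congrArg (fun X : Pt => X 0) hpq
  have h1 := congrArg (fun X : Pt => X 1) hpq
  simp at h0 h1
  rw [crossDet] at h
  constructor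
  · refine (mul_eq_zero.1 ?_).resolve_right h
    linear_combination (C 1 - A 1) * h0 - (C 0 - A 0) * h1
  · refine (mul_eq_zero.1 ?_).resolve_right h
    linear_combination (B 0 - A 0) * h1 - (B 1 - A 1) * h0

/-- The linear map sending the standard basis to the edge vectors of `A B C` at `A`. -/
def edgeMap (A B C : Pt) : Pt →ₗ[ℝ] Pt :=
  Matrix.toLin (EuclideanSpace.basisFun (Fin 2) ℝ).toBasis
    (EuclideanSpace.basisFun (Fin 2) ℝ).toBasis
    !![B 0 - A 0, C 0 - A 0; B 1 - A 1, C 1 - A 1]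

lemma det_edgeMap (A B C : Pt) : LinearMap.det (edgeMap A B C) = crossDet A B C := by
  rw [edgeMap, LinearMap.det_toLin, Matrix.det_fin_two_of, crossDet]

lemma edgeMap_apply (A B C : Pt) (x : Pt) :
    edgeMap A B C x = x 0 • (B - A) + x 1 • (C - A) := by
  ext i
  fin_cases i <;> simp [edgeMap, Matrix.toLin_apply, Matrix.mulVec, dotProduct] <;> ring

/-- The area of a triangle is proportional to its determinant. -/
lemma triArea_eq (A B C : Pt) :
    triArea A B C = |crossDet A B C| * triArea 0 !₂[1, 0] !₂[0, 1] := by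
  have himg : tri A B C = (fun x => A + x) '' (edgeMap A B C '' tri 0 !₂[1, 0] !₂[0, 1]) := by
    ext X
    simp only [Set.mem_image, mem_tri_iff, exists_exists_and_eq_and]
    constructor
    · rintro ⟨a, b, c, ha, hb, hc, habc, rfl⟩
      refine ⟨_, ⟨a, b, c, ha, hb, hc, habc, rfl⟩, ?_⟩
      obtain rfl : a = 1 - b - c := by linarith
      simp [edgeMap_apply]
      module
    · rintro ⟨_, ⟨a, b, c, ha, hb, hc, habc, rfl⟩, rfl⟩
      refine ⟨a, b, c, ha, hb, hc, habc, ?_⟩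
      obtain rfl : a = 1 - b - c := by linarith
      simp [edgeMap_apply]
      module
  rw [triArea, himg, Set.image_add_left, measure_preimage_add,
    Measure.addHaar_image_linearMap, det_edgeMap, ENNReal.toReal_mul,
    ENNReal.toReal_ofReal (abs_nonneg _), triArea]

lemma triArea_pos {A B C : Pt} (h : AffineIndependent ℝ ![A, B, C]) : 0 < triArea A B C := by
  have hspan : affineSpan ℝ (Set.range ![A, B, C]) = ⊤ := by
    rw [h.affineSpan_eq_top_iff_card_eq_finrank_add_one]
    simp
  have hrange : Set.range ![A, B, C] = {A, B, C} := by
    rw [Matrix.range_cons, Matrix.range_cons_cons_empty]; rfl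
  rw [hrange] at hspan
  have hint := interior_convexHull_nonempty_iff_affineSpan_eq_top.2 hspan
  have hcompact : IsCompact (tri A B C) :=
    (Set.toFinite {A, B, C}).isCompact_convexHull ℝ
  exact ENNReal.toReal_pos (Measure.measure_pos_of_nonempty_interior _ hint).ne'
    hcompact.measure_ne_top

lemma convexCombination_le {a b c x y z k : ℝ} (ha : 0 ≤ a) (hb : 0 ≤ b) (hc : 0 ≤ c)
    (habc : a + b + c = 1) (hx : x ≤ k) (hy : y ≤ k) (hz : z ≤ k) :
    a * x + b * y + c * z ≤ k := by
  calc a * x + b * y + c * z ≤ a * k + b * k + c * k := by gcongr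
    _ = k := by rw [← add_mul, ← add_mul, habc, one_mul]

lemma le_convexCombination {a b c x y z k : ℝ} (ha : 0 ≤ a) (hb : 0 ≤ b) (hc : 0 ≤ c)
    (habc : a + b + c = 1) (hx : k ≤ x) (hy : k ≤ y) (hz : k ≤ z) :
    k ≤ a * x + b * y + c * z := by
  calc k = a * k + b * k + c * k := by rw [← add_mul, ← add_mul, habc, one_mul]
    _ ≤ a * x + b * y + c * z := by gcongr

/-- If a triangle contains a vertical segment of length `δ` over the abscissa `t`, its area is
bounded below in terms of the abscissae of its vertices, the first vertex being the leftmost. -/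
lemma section_bound_left {x₁ x₂ x₃ y₁ y₂ y₃ a b c a' b' c' t δ D : ℝ}
    (ha : 0 ≤ a) (hb : 0 ≤ b) (hc : 0 ≤ c) (habc : a + b + c = 1)
    (ha' : 0 ≤ a') (hb' : 0 ≤ b') (hc' : 0 ≤ c') (habc' : a' + b' + c' = 1)
    (hx : a * x₁ + b * x₂ + c * x₃ = t) (hy : a * y₁ + b * y₂ + c * y₃ = δ)
    (hx' : a' * x₁ + b' * x₂ + c' * x₃ = t) (hy' : a' * y₁ + b' * y₂ + c' * y₃ = 0)
    (h₂ : x₁ ≤ x₂) (h₃ : x₁ ≤ x₃)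
    (hD : D = (x₂ - x₁) * (y₃ - y₁) - (x₃ - x₁) * (y₂ - y₁)) :
    δ * ((x₂ - x₁) * (x₃ - x₁)) ≤ (t - x₁) * |D| := by
  obtain rfl : a = 1 - b - c := by linarith
  obtain rfl : a' = 1 - b' - c' := by linarith
  have key : δ * (x₂ - x₁) = (c - c') * D := by
    rw [hD]
    linear_combination (x₂ - x₁) * (hy' - hy) - (y₂ - y₁) * (hx' - hx)
  have h1 : c * (x₃ - x₁) ≤ t - x₁ := by nlinarith [mul_nonneg hb (sub_nonneg.2 h₂)]
  have h2 : c' * (x₃ - x₁) ≤ t - x₁ := by nlinarith [mul_nonneg hb' (sub_nonneg.2 h₂)]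
  have h3 : 0 ≤ c * (x₃ - x₁) := mul_nonneg hc (sub_nonneg.2 h₃)
  have h4 : 0 ≤ c' * (x₃ - x₁) := mul_nonneg hc' (sub_nonneg.2 h₃)
  have h5 : |(c - c') * (x₃ - x₁)| ≤ t - x₁ := by
    rw [abs_le]
    constructor <;> nlinarith
  calc δ * ((x₂ - x₁) * (x₃ - x₁)) = ((c - c') * (x₃ - x₁)) * D := by
        rw [← mul_assoc, key]; ring
    _ ≤ |((c - c') * (x₃ - x₁)) * D| := le_abs_self _
    _ = |(c - c') * (x₃ - x₁)| * |D| := abs_mul _ _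
    _ ≤ (t - x₁) * |D| := by gcongr

lemma section_bound_right {x₁ x₂ x₃ y₁ y₂ y₃ a b c a' b' c' t δ D : ℝ}
    (ha : 0 ≤ a) (hb : 0 ≤ b) (hc : 0 ≤ c) (habc : a + b + c = 1)
    (ha' : 0 ≤ a') (hb' : 0 ≤ b') (hc' : 0 ≤ c') (habc' : a' + b' + c' = 1)
    (hx : a * x₁ + b * x₂ + c * x₃ = t) (hy : a * y₁ + b * y₂ + c * y₃ = δ)
    (hx' : a' * x₁ + b' * x₂ + c' * x₃ = t) (hy' : a' * y₁ + b' * y₂ + c' * y₃ = 0)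
    (h₂ : x₂ ≤ x₁) (h₃ : x₃ ≤ x₁)
    (hD : D = (x₂ - x₁) * (y₃ - y₁) - (x₃ - x₁) * (y₂ - y₁)) :
    δ * ((x₁ - x₂) * (x₁ - x₃)) ≤ (x₁ - t) * |D| := by
  have h := section_bound_left (x₁ := -x₁) (x₂ := -x₂) (x₃ := -x₃) (t := -t) (D := -D)
    ha hb hc habc ha' hb' hc' habc' (by linarith) hy (by linarith) hy' (by linarith)
    (by linarith) (by rw [hD]; ring)
  rw [abs_neg] at h
  linarith

/-- A vertex of a triangle containing `(0, 0)` and `(1, 0)` has height at most twice the area. -/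
lemma abs_height_le {x₁ x₂ x₃ y₁ y₂ y₃ a b c a' b' c' D : ℝ}
    (ha : 0 ≤ a) (hb : 0 ≤ b) (hc : 0 ≤ c) (habc : a + b + c = 1)
    (ha' : 0 ≤ a') (hb' : 0 ≤ b') (hc' : 0 ≤ c') (habc' : a' + b' + c' = 1)
    (hx : a * x₁ + b * x₂ + c * x₃ = 0) (hy : a * y₁ + b * y₂ + c * y₃ = 0)
    (hx' : a' * x₁ + b' * x₂ + c' * x₃ = 1) (hy' : a' * y₁ + b' * y₂ + c' * y₃ = 0)
    (hD : |(x₂ - x₁) * (y₃ - y₁) - (x₃ - x₁) * (y₂ - y₁)| ≤ D) :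
    |y₁| ≤ D := by
  have key : y₁ = (b * c' - c * b') *
      ((x₂ - x₁) * (y₃ - y₁) - (x₃ - x₁) * (y₂ - y₁)) := by
    have h : ((a' * x₁ + b' * x₂ + c' * x₃) - (a * x₁ + b * x₂ + c * x₃)) *
        (y₁ - (a * y₁ + b * y₂ + c * y₃)) -
        ((a' * y₁ + b' * y₂ + c' * y₃) - (a * y₁ + b * y₂ + c * y₃)) *
        (x₁ - (a * x₁ + b * x₂ + c * x₃)) = (b * c' - c * b') *
        ((x₂ - x₁) * (y₃ - y₁) - (x₃ - x₁) * (y₂ - y₁)) := by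
      obtain rfl : a = 1 - b - c := by linarith
      obtain rfl : a' = 1 - b' - c' := by linarith
      ring
    rw [hx, hy, hx', hy'] at h
    linarith
  have hcoef : |b * c' - c * b'| ≤ 1 := by
    rw [abs_le]
    constructor <;> nlinarith [mul_nonneg hb hc', mul_nonneg hc hb',
      mul_le_one₀ (show b ≤ 1 by linarith) hc' (by linarith),
      mul_le_one₀ (show c ≤ 1 by linarith) hb' (by linarith)]
  calc |y₁| = |b * c' - c * b'| *
        |(x₂ - x₁) * (y₃ - y₁) - (x₃ - x₁) * (y₂ - y₁)| := by rw [← abs_mul, ← key]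
    _ ≤ 1 * D := by gcongr
    _ = D := one_mul D

/-- No section estimate below the threshold is possible when the two legs of the container end at
nearly the same abscissa and its apex is to the left. -/
lemma vertical_side_left {s r δ u v w : ℝ} (hs1 : 7 / 5 < s)
    (hδ : 0 < δ) (hδ' : δ ≤ 1 / 100) (hr : r ≤ s - 10 * δ) (hs2 : s < 3 / 2)
    (hv : v ≤ 0) (hu : 1 - 3 * δ ≤ u) (hw : 1 - 3 * δ ≤ w)
    (h : (u - v) * (w - v) ≤ (1 - s / 2 - v) * r) : False := by
  have h1 : (1 - 3 * δ - v) ^ 2 ≤ (u - v) * (w - v) := by nlinarith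
  have h2 : 4 * (s / 2 - 3 * δ) * (1 - s / 2 - v) ≤ (1 - 3 * δ - v) ^ 2 := by
    nlinarith [sq_nonneg ((s / 2 - 3 * δ) - (1 - s / 2 - v))]
  have h3 : 0 < 1 - s / 2 - v := by linarith
  have h4 : (1 - s / 2 - v) * (4 * (s / 2 - 3 * δ)) ≤ (1 - s / 2 - v) * r := by linarith
  have h5 := le_of_mul_le_mul_left h4 h3
  linarith

/-- No section estimate below the threshold is possible when the two legs of the container end at
nearly the same abscissa and its apex is to the right. -/
lemma vertical_side_right {s r δ u v w : ℝ} (hs : s ^ 2 = 2) (hs1 : 7 / 5 < s)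
    (hδ : 0 < δ) (hδ' : δ ≤ 1 / 100) (hr : r ≤ s - 10 * δ) (hs2 : s < 3 / 2)
    (hv : 1 ≤ v) (hu : u ≤ 3 * δ) (hw : w ≤ 3 * δ)
    (h : (v - u) * (v - w) ≤ (v - (1 - s / 2)) * r) : False := by
  have h1 : (v - 3 * δ) ^ 2 ≤ (v - u) * (v - w) := by nlinarith
  have h2 : (v - (1 - s / 2)) * s ≤ v ^ 2 := by nlinarith [sq_nonneg (v - 1)]
  have h3 : 6 * v ≤ 10 * (v - (1 - s / 2)) := by linarith
  have h4 : (v - (1 - s / 2)) * r ≤ (v - (1 - s / 2)) * (s - 10 * δ) := by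
    gcongr
    linarith
  nlinarith

/-- No section estimate below the threshold is possible when the abscissa of the apex of the
container is nearly the midpoint of the abscissae of its base. -/
lemma vertical_median {s r δ u v w : ℝ}
    (hδ : 0 < δ) (hδ' : δ ≤ 1 / 100) (hr : r ≤ s - 10 * δ) (hs2 : s < 3 / 2)
    (hu : u ≤ 0) (hw : 1 ≤ w) (huv : u + w - 3 * δ ≤ 2 * v)
    (h : (v - u) * (w - u) ≤ (1 - s / 2 - u) * r) : False := by
  have h1 : (1 - u - 3 * δ) * (1 - u) ≤ (2 * (v - u)) * (w - u) := by
    gcongr <;> linarith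
  have h2 : 4 * (s / 2) * (1 - s / 2 - u) ≤ (1 - u) ^ 2 := by
    nlinarith [sq_nonneg (s / 2 - (1 - s / 2 - u))]
  have h3 : 0 < 1 - s / 2 - u := by linarith
  have h4 : (1 - s / 2 - u) * r ≤ (1 - s / 2 - u) * (s - 10 * δ) := by gcongr
  have h5 : 3 * (1 - u) < 20 * (1 - s / 2 - u) := by linarith
  nlinarith

/-- If two sides of a flat triangle at `(v, x)` are equal, then either their other endpoints have
nearly the same abscissa or `v` is near the midpoint of the two abscissae. -/
lemma abs_sub_le_or_abs_add_sub_le {δ u v w x y z : ℝ} (hδ : 0 < δ)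
    (hy : |x - y| ≤ 3 * δ) (hz : |x - z| ≤ 3 * δ)
    (h : (v - u) ^ 2 + (x - y) ^ 2 = (v - w) ^ 2 + (x - z) ^ 2) :
    |u - w| ≤ 3 * δ ∨ |u + w - 2 * v| ≤ 3 * δ := by
  have h1 : (x - y) ^ 2 ≤ (3 * δ) ^ 2 := sq_le_sq' (abs_le.1 hy).1 (abs_le.1 hy).2
  have h2 : (x - z) ^ 2 ≤ (3 * δ) ^ 2 := sq_le_sq' (abs_le.1 hz).1 (abs_le.1 hz).2
  have hprod : |u - w| * |u + w - 2 * v| ≤ 3 * δ * (3 * δ) := by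
    rw [← abs_mul, abs_le]
    constructor <;> linarith [sq_nonneg (x - y), sq_nonneg (x - z)]
  by_contra! hlt
  exact hprod.not_gt (mul_lt_mul'' hlt.1 hlt.2 (by positivity) (by positivity))

set_option maxHeartbeats 1000000 in
/-- Every isosceles triangle with apex `V` that contains the flat triangle with vertices `(0, 0)`,
`(1, 0)`, `(1 - √2 / 2, δ)` has area larger than `√2 - ε` times the area of that triangle. -/
lemma lt_crossDet_of_isosceles {ε δ : ℝ} (hδ : 0 < δ) (hδ' : δ ≤ 1 / 100) (hε : 10 * δ ≤ ε)
    {V U W : Pt} (hiso : dist V U = dist V W)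
    (hA : (0 : Pt) ∈ tri V U W) (hB : (!₂[1, 0] : Pt) ∈ tri V U W)
    (hC : (!₂[1 - √2 / 2, δ] : Pt) ∈ tri V U W) :
    (√2 - ε) * δ < |crossDet V U W| := by
  by_contra! hD
  have hs : √2 ^ 2 = 2 := Real.sq_sqrt (by norm_num)
  have hs0 := Real.sqrt_nonneg 2
  have hs1 : 7 / 5 < √2 := by nlinarith
  have hs2 : √2 < 3 / 2 := by nlinarith
  have hC' : (!₂[1 - √2 / 2, 0] : Pt) ∈ tri V U W := by
    have h := (convex_convexHull ℝ {V, U, W}) hA hB (a := √2 / 2) (b := 1 - √2 / 2)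
      (by linarith) (by linarith) (by ring)
    have heq : (!₂[1 - √2 / 2, 0] : Pt) = (√2 / 2) • 0 + (1 - √2 / 2) • !₂[1, 0] := by
      ext i
      fin_cases i <;> simp
    rwa [heq]
  have hdist : (V 0 - U 0) ^ 2 + (V 1 - U 1) ^ 2 = (V 0 - W 0) ^ 2 + (V 1 - W 1) ^ 2 := by
    rw [EuclideanSpace.dist_eq, EuclideanSpace.dist_eq,
      Real.sqrt_inj (by positivity) (by positivity)] at hiso
    simpa [Fin.sum_univ_two, Real.dist_eq, sq_abs] using hiso
  obtain ⟨a, b, c, ha, hb, hc, habc, hAe⟩ := mem_tri_iff.1 hA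
  obtain ⟨a', b', c', ha', hb', hc', habc', hBe⟩ := mem_tri_iff.1 hB
  obtain ⟨p, q, m, hp, hq, hm, hpqm, hCe⟩ := mem_tri_iff.1 hC
  obtain ⟨p', q', m', hp', hq', hm', hpqm', hCe'⟩ := mem_tri_iff.1 hC'
  have hA0 := congrArg (fun X : Pt => X 0) hAe
  have hA1 := congrArg (fun X : Pt => X 1) hAe
  have hB0 := congrArg (fun X : Pt => X 0) hBe
  have hB1 := congrArg (fun X : Pt => X 1) hBe
  have hC0 := congrArg (fun X : Pt => X 0) hCe
  have hC1 := congrArg (fun X : Pt => X 1) hCe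
  have hC0' := congrArg (fun X : Pt => X 0) hCe'
  have hC1' := congrArg (fun X : Pt => X 1) hCe'
  simp at hA0 hA1 hB0 hB1 hC0 hC1 hC0' hC1'
  rw [crossDet] at hD
  generalize U 0 = u, V 0 = v, W 0 = w, U 1 = y, V 1 = x, W 1 = z at *
  have hr : √2 - ε ≤ √2 - 10 * δ := by linarith
  have hDs : |(u - v) * (z - x) - (w - v) * (y - x)| ≤ 3 / 2 * δ := by nlinarith
  have hDs' : |(v - u) * (z - y) - (w - u) * (x - y)| ≤ 3 / 2 * δ := by
    rw [← abs_neg]; convert hDs using 2; ring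
  have hDs'' : |(v - w) * (y - z) - (u - w) * (x - z)| ≤ 3 / 2 * δ := by
    convert hDs using 2; ring
  have hx := abs_height_le ha hb hc habc ha' hb' hc' habc' hA0 hA1 hB0 hB1 hDs
  have hy := abs_height_le hb ha hc (by linarith) hb' ha' hc' (by linarith)
    (x₁ := u) (x₂ := v) (x₃ := w) (y₁ := y) (y₂ := x) (y₃ := z)
    (by linarith) (by linarith) (by linarith) (by linarith) hDs'
  have hz := abs_height_le hc ha hb (by linarith) hc' ha' hb' (by linarith)
    (x₁ := w) (x₂ := v) (x₃ := u) (y₁ := z) (y₂ := x) (y₃ := y)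
    (by linarith) (by linarith) (by linarith) (by linarith) hDs''
  rw [abs_le] at hx hy hz
  have hcancel {P Q : ℝ} (hQ : 0 ≤ Q)
      (h : δ * P ≤ Q * |(u - v) * (z - x) - (w - v) * (y - x)|) : P ≤ Q * (√2 - ε) := by
    have h' := h.trans (mul_le_mul_of_nonneg_left hD hQ)
    rw [← mul_assoc, mul_comm _ δ] at h'
    exact le_of_mul_le_mul_left h' hδ
  have hmin {k : ℝ} (hv : k ≤ v) (hu : k ≤ u) (hw : k ≤ w) : k ≤ 0 :=
    hA0 ▸ le_convexCombination ha hb hc habc hv hu hw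
  have hmax {k : ℝ} (hv : v ≤ k) (hu : u ≤ k) (hw : w ≤ k) : 1 ≤ k :=
    hB0 ▸ convexCombination_le ha' hb' hc' habc' hv hu hw
  have hsplit := abs_sub_le_or_abs_add_sub_le hδ (abs_le.2 ⟨by linarith, by linarith⟩)
    (abs_le.2 ⟨by linarith, by linarith⟩) hdist
  rcases hsplit with h | h
  · rw [abs_le] at h
    rcases le_total v u with hvu | hvu <;> rcases le_total v w with hvw | hvw
    · have hv := hmin le_rfl hvu hvw
      have h1 : 1 ≤ max u w := hmax (le_max_of_le_left hvu) (le_max_left _ _) (le_max_right _ _)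
      rw [le_max_iff] at h1
      exact vertical_side_left hs1 hδ hδ' hr hs2 hv
        (by rcases h1 with h1 | h1 <;> linarith) (by rcases h1 with h1 | h1 <;> linarith)
        (hcancel (by linarith) (section_bound_left hp hq hm hpqm hp' hq' hm' hpqm'
          hC0 hC1 hC0' hC1' hvu hvw rfl))
    · have h1 := hmin hvw (hvw.trans hvu) le_rfl
      have h2 := hmax hvu le_rfl (hvw.trans hvu)
      linarith
    · have h1 := hmin hvu le_rfl (hvu.trans hvw)
      have h2 := hmax hvw (hvu.trans hvw) le_rfl
      linarith
    · have hv := hmax le_rfl hvu hvw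
      have h1 : min u w ≤ 0 := hmin (min_le_of_left_le hvu) (min_le_left _ _) (min_le_right _ _)
      rw [min_le_iff] at h1
      exact vertical_side_right hs hs1 hδ hδ' hr hs2 hv
        (by rcases h1 with h1 | h1 <;> linarith) (by rcases h1 with h1 | h1 <;> linarith)
        (hcancel (by linarith) (section_bound_right hp hq hm hpqm hp' hq' hm' hpqm'
          hC0 hC1 hC0' hC1' hvu hvw rfl))
  · rw [abs_le] at h
    rcases le_total v u with hvu | hvu <;> rcases le_total v w with hvw | hvw
    · have h1 := hmin le_rfl hvu hvw
      have h2 := hmax (k := 3 * δ + v) (by linarith) (by linarith) (by linarith)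
      linarith
    · have hw := hmin hvw (hvw.trans hvu) le_rfl
      have hu := hmax hvu le_rfl (hvw.trans hvu)
      refine vertical_median hδ hδ' hr hs2 hw hu (v := v) (by linarith)
        (hcancel (by linarith) ?_)
      have := section_bound_left hm hp hq (by linarith) hm' hp' hq' (by linarith)
        (x₁ := w) (x₂ := v) (x₃ := u) (y₁ := z) (y₂ := x) (y₃ := y) (t := 1 - √2 / 2) (δ := δ)
        (by linarith) (by linarith) (by linarith) (by linarith) hvw (hvw.trans hvu) rfl
      convert this using 3
      ring
    · have hu := hmin hvu le_rfl (hvu.trans hvw)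
      have hw := hmax hvw (hvu.trans hvw) le_rfl
      refine vertical_median hδ hδ' hr hs2 hu hw (v := v) (by linarith)
        (hcancel (by linarith) ?_)
      have := section_bound_left hq hp hm (by linarith) hq' hp' hm' (by linarith)
        (x₁ := u) (x₂ := v) (x₃ := w) (y₁ := y) (y₂ := x) (y₃ := z) (t := 1 - √2 / 2) (δ := δ)
        (by linarith) (by linarith) (by linarith) (by linarith) hvu (hvu.trans hvw) rfl
      rw [← abs_neg] at this
      convert this using 3
      ring
    · have h1 := hmax le_rfl hvu hvw
      have h2 := hmin (k := v - 3 * δ) (by linarith) (by linarith) (by linarith)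
      linarith

/-- the constant `√2` is best possible: for every `ε > 0` there is
a triangle `A B C` all of whose isosceles containers have area strictly greater
than `(√2 - ε) · t(ABC)`. -/
theorem statement7 (ε : ℝ) (hε : 0 < ε) :
    ∃ A B C : Pt, AffineIndependent ℝ ![A, B, C] ∧
      ∀ S P R : Pt, IsIsoscelesContainer A B C S P R →
        (Real.sqrt 2 - ε) * triArea A B C < triArea S P R := by
  set δ : ℝ := min (1 / 100) (ε / 10) with hδdef
  have hδ : 0 < δ := lt_min (by norm_num) (by positivity)
  have hδ' : δ ≤ 1 / 100 := min_le_left _ _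
  have hδε : 10 * δ ≤ ε := by linarith [min_le_right (1 / 100) (ε / 10)]
  have hdet : crossDet 0 !₂[1, 0] !₂[1 - √2 / 2, δ] = δ := by simp [crossDet]
  refine ⟨0, !₂[1, 0], !₂[1 - √2 / 2, δ],
    affineIndependent_of_crossDet_ne_zero (by rw [hdet]; exact hδ.ne'), ?_⟩
  rintro S P R ⟨-, hiso, hsub⟩
  have hvert : ({0, !₂[1, 0], !₂[1 - √2 / 2, δ]} : Set Pt) ⊆ tri S P R :=
    (subset_convexHull ℝ _).trans hsub
  have hA : (0 : Pt) ∈ tri S P R := hvert (by simp)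
  have hB : (!₂[1, 0] : Pt) ∈ tri S P R := hvert (by simp)
  have hC : (!₂[1 - √2 / 2, δ] : Pt) ∈ tri S P R := hvert (by simp)
  have hpos : 0 < triArea 0 !₂[1, 0] !₂[0, 1] :=
    triArea_pos (affineIndependent_of_crossDet_ne_zero (by simp [crossDet]))
  rw [triArea_eq S P R, triArea_eq 0 !₂[1, 0] !₂[1 - √2 / 2, δ], hdet, abs_of_pos hδ, ← mul_assoc]
  refine mul_lt_mul_of_pos_right ?_ hpos
  rcases hiso with h | h | h
  · have htri : tri R P S = tri S P R := by
      simp only [tri, Set.insert_comm R, Set.pair_comm R, Set.insert_comm P]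
    have hcross : crossDet R P S = -crossDet S P R := by simp only [crossDet]; ring
    rw [← abs_neg, ← hcross]
    rw [← htri] at hA hB hC
    exact lt_crossDet_of_isosceles hδ hδ' hδε (by rw [dist_comm, h]) hA hB hC
  · exact lt_crossDet_of_isosceles hδ hδ' hδε (by rw [dist_comm S R, ← h, dist_comm]) hA hB hC
  · have htri : tri P S R = tri S P R := by
      simp only [tri, Set.insert_comm P]
    have hcross : crossDet P S R = -crossDet S P R := by simp only [crossDet]; ring
    rw [← abs_neg, ← hcross]
    rw [← htri] at hA hB hC
    exact lt_crossDet_of_isosceles hδ hδ' hδε (by rw [dist_comm, h]) hA hB hC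
end
end
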